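/- arXiv:2308.03967 — 3 statements merged into one kernel-verified Lean document; each statement's English description precedes it below -/
import Mathlib

section
/- For every integer k ≥ 1, the number of edges of the graph G_k equals (8·4^k − 3·3^k − 5)/6. -/
/-- The recursively defined vertex sets `S(i,j)`:
`S(0,j) = {2j}` and `S(i+1,m) = S(i,3m) ∪ S(i,3m+1)`. -/
def Sset : ℕ → ℕ → Finset ℕ
  | 0, j => {2 * j}
  | i + 1, m => Sset i (3 * m) ∪ Sset i (3 * m + 1)

/-- The graph `G_k` on the vertex set `{0, 1, …, 3^k − 1}` (encoded as `Fin (3^k)`):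
its edges are (a) `{m, m+1}` for `0 ≤ m ≤ 3^k − 2`, and (b) `{u, v}` for every level
`0 ≤ i ≤ k−1`, every `j` with `0 ≤ j < (3^(k−i) + 1)/2 − 1`, every `u ∈ S(i,j)` and
every `v ∈ S(i,j+1)`. -/
def Gk (k : ℕ) : SimpleGraph (Fin (3 ^ k)) :=
  SimpleGraph.fromRel fun u v =>
    ((u : ℕ) + 1 = (v : ℕ)) ∨
    ∃ i < k, ∃ j : ℕ, j + 1 < (3 ^ (k - i) + 1) / 2 ∧
      (u : ℕ) ∈ Sset i j ∧ (v : ℕ) ∈ Sset i (j + 1)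

theorem Sset_bounds (i : ℕ) : ∀ j u, u ∈ Sset i j →
    u % 2 = 0 ∧ 2 * 3 ^ i * j ≤ u ∧ u + 1 ≤ 2 * 3 ^ i * j + 3 ^ i := by
  induction i with
  | zero => intro j u h; simp [Sset] at h; subst h; simp
  | succ i ih =>
    intro m u h
    simp only [Sset, Finset.mem_union] at h
    have e1 : 2 * 3 ^ (i + 1) * m = 2 * 3 ^ i * (3 * m) := by ring
    have e2 : 2 * 3 ^ i * (3 * m + 1) = 2 * 3 ^ i * (3 * m) + 2 * 3 ^ i := by ring
    have e3 : 3 ^ (i + 1) = 3 * 3 ^ i := by ring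
    rcases h with h | h
    · have := ih _ _ h
      omega
    · have := ih _ _ h
      omega

theorem Sset_unique {i j j' u : ℕ} (h : u ∈ Sset i j) (h' : u ∈ Sset i j') : j = j' := by
  have aux : ∀ a b, u ∈ Sset i a → u ∈ Sset i b → ¬ a < b := by
    intro a b ha hb hab
    have h1 := Sset_bounds i _ _ ha
    have h2 := Sset_bounds i _ _ hb
    have h3 : 2 * 3 ^ i * (a + 1) ≤ 2 * 3 ^ i * b := Nat.mul_le_mul_left _ hab
    have h4 : 2 * 3 ^ i * (a + 1) = 2 * 3 ^ i * a + 2 * 3 ^ i := by ring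
    omega
  have := aux _ _ h h'
  have := aux _ _ h' h
  omega

theorem Sset_card (i : ℕ) : ∀ j, (Sset i j).card = 2 ^ i := by
  induction i with
  | zero => intro j; simp [Sset]
  | succ i ih =>
    intro m
    rw [Sset, Finset.card_union_of_disjoint, ih, ih]
    · ring
    · rw [Finset.disjoint_left]
      intro u h h'
      have := Sset_unique h h'
      omega

/-- going down levels -/
theorem Sset_down (i d : ℕ) : ∀ m u, u ∈ Sset (i + d) m →
    ∃ j, u ∈ Sset i j ∧ j / 3 ^ d = m ∧ (0 < d → j % 3 ≠ 2) := by
  induction d with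
  | zero => intro m u h; exact ⟨m, h, by simp, by simp⟩
  | succ d ih =>
    intro m u h
    have h : u ∈ Sset (i + d) (3 * m) ∪ Sset (i + d) (3 * m + 1) := h
    obtain ⟨t, ht, h⟩ : ∃ t, (t = 3 * m ∨ t = 3 * m + 1) ∧ u ∈ Sset (i + d) t := by
      rcases Finset.mem_union.1 h with h | h
      · exact ⟨_, Or.inl rfl, h⟩
      · exact ⟨_, Or.inr rfl, h⟩
    obtain ⟨j, hj, hjm, hd⟩ := ih _ _ h
    refine ⟨j, hj, ?_, fun _ => ?_⟩
    · rw [pow_succ, ← Nat.div_div_eq_div_mul, hjm]; omega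
    · rcases Nat.eq_zero_or_pos d with rfl | h0
      · simp at hjm; omega
      · exact hd h0

theorem level_unique {i i' j j' u v : ℕ} (hu : u ∈ Sset i j) (hv : v ∈ Sset i (j + 1))
    (hu' : u ∈ Sset i' j') (hv' : v ∈ Sset i' (j' + 1)) : i = i' := by
  have aux : ∀ a b x y, u ∈ Sset a x → v ∈ Sset a (x + 1) → u ∈ Sset b y → v ∈ Sset b (y + 1) →
      ¬ a < b := by
    intro a b x y h1 h2 h3 h4 hab
    obtain ⟨d, rfl⟩ := Nat.exists_eq_add_of_lt hab
    obtain ⟨s, hs, hs1, hs2⟩ := Sset_down a (d + 1) _ _ h3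
    obtain ⟨t, ht, ht1, ht2⟩ := Sset_down a (d + 1) _ _ h4
    have e1 := Sset_unique h1 hs
    have e2 := Sset_unique h2 ht
    subst e1 e2
    have := hs2 (by omega)
    rw [pow_succ', ← Nat.div_div_eq_div_mul] at hs1 ht1
    have : (x + 1) / 3 = x / 3 := by omega
    rw [this] at ht1
    omega
  have := aux _ _ _ _ hu hv hu' hv'
  have := aux _ _ _ _ hu' hv' hu hv
  omega

def levelE (k i : ℕ) : Finset (ℕ × ℕ) :=
  (Finset.range ((3 ^ (k - i) + 1) / 2 - 1)).biUnion fun j => Sset i j ×ˢ Sset i (j + 1)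

def pathE (k : ℕ) : Finset (ℕ × ℕ) :=
  (Finset.range (3 ^ k - 1)).image fun m => (m, m + 1)

def allE (k : ℕ) : Finset (ℕ × ℕ) :=
  pathE k ∪ (Finset.range k).biUnion (levelE k)

theorem mem_levelE {k i : ℕ} {p : ℕ × ℕ} : p ∈ levelE k i ↔
    ∃ j, j + 1 < (3 ^ (k - i) + 1) / 2 ∧ p.1 ∈ Sset i j ∧ p.2 ∈ Sset i (j + 1) := by
  simp only [levelE, Finset.mem_biUnion, Finset.mem_range, Finset.mem_product]
  refine exists_congr fun j => and_congr_left fun _ => ?_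
  omega

theorem card_levelE (k i : ℕ) :
    (levelE k i).card = ((3 ^ (k - i) + 1) / 2 - 1) * 4 ^ i := by
  rw [levelE, Finset.card_biUnion]
  · simp only [Finset.card_product, Sset_card, Finset.sum_const, Finset.card_range, smul_eq_mul]
    rw [← mul_pow, show 2 * 2 = 4 from rfl]
  · intro a _ b _ hab
    refine Finset.disjoint_left.2 ?_
    intro p h h'
    exact hab (Sset_unique (Finset.mem_product.1 h).1 (Finset.mem_product.1 h').1)

theorem three_odd (n : ℕ) : 3 ^ n % 2 = 1 := by
  simp [Nat.pow_mod]

theorem sum_levels (k : ℕ) :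
    6 * (∑ i ∈ Finset.range k, ((3 ^ (k - i) + 1) / 2 - 1) * 4 ^ i) + 9 * 3 ^ k
      = 8 * 4 ^ k + 1 := by
  induction k with
  | zero => simp
  | succ k ih =>
    rw [Finset.sum_range_succ']
    have : ∑ i ∈ Finset.range k, ((3 ^ (k + 1 - (i + 1)) + 1) / 2 - 1) * 4 ^ (i + 1)
        = 4 * ∑ i ∈ Finset.range k, ((3 ^ (k - i) + 1) / 2 - 1) * 4 ^ i := by
      rw [Finset.mul_sum]
      refine Finset.sum_congr rfl fun i _ => ?_
      rw [Nat.add_sub_add_right]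
      ring
    rw [this]
    have h1 := three_odd k
    simp only [Nat.sub_zero, pow_zero, mul_one, pow_succ]
    omega

theorem card_allE (k : ℕ) : 6 * (allE k).card + 3 * 3 ^ k + 5 = 8 * 4 ^ k := by
  have hs := sum_levels k
  have h3 := three_odd k
  have : (allE k).card = (3 ^ k - 1) +
      ∑ i ∈ Finset.range k, ((3 ^ (k - i) + 1) / 2 - 1) * 4 ^ i := by
    rw [allE, Finset.card_union_of_disjoint, Finset.card_biUnion]
    · congr 1
      · rw [pathE, Finset.card_image_of_injective, Finset.card_range]
        intro a b h
        exact (Prod.mk.inj h).1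
      · exact Finset.sum_congr rfl fun i _ => card_levelE k i
    · intro a _ b _ hab
      refine Finset.disjoint_left.2 ?_
      intro p h h'
      obtain ⟨j, _, h1, h2⟩ := mem_levelE.1 h
      obtain ⟨j', _, h1', h2'⟩ := mem_levelE.1 h'
      exact hab (level_unique h1 h2 h1' h2')
    · rw [Finset.disjoint_left]
      intro p h h'
      obtain ⟨m, _, rfl⟩ := Finset.mem_image.1 h
      obtain ⟨i, _, h'⟩ := Finset.mem_biUnion.1 h'
      obtain ⟨j, _, h1, h2⟩ := mem_levelE.1 h'
      have := (Sset_bounds _ _ _ h1).1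
      have := (Sset_bounds _ _ _ h2).1
      simp only at *
      omega
  omega

theorem mem_allE {k : ℕ} {p : ℕ × ℕ} : p ∈ allE k ↔ (p.1 + 1 = p.2 ∧ p.2 < 3 ^ k) ∨
    ∃ i < k, ∃ j : ℕ, j + 1 < (3 ^ (k - i) + 1) / 2 ∧ p.1 ∈ Sset i j ∧ p.2 ∈ Sset i (j + 1) := by
  obtain ⟨u, v⟩ := p
  simp only [allE, pathE, Finset.mem_union, Finset.mem_biUnion, Finset.mem_range, mem_levelE,
    Finset.mem_image, Prod.mk.injEq]
  refine or_congr ?_ Iff.rfl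
  constructor
  · rintro ⟨m, h, rfl, rfl⟩; omega
  · rintro ⟨rfl, h⟩; exact ⟨u, by omega, rfl, rfl⟩

theorem allE_bound {k : ℕ} {p : ℕ × ℕ} (h : p ∈ allE k) : p.1 < p.2 ∧ p.2 < 3 ^ k := by
  rcases mem_allE.1 h with h | ⟨i, hi, j, hj, hu, hv⟩
  · omega
  · have h1 := Sset_bounds _ _ _ hu
    have h2 := Sset_bounds _ _ _ hv
    have h4 : 2 * 3 ^ i * (j + 1) = 2 * 3 ^ i * j + 2 * 3 ^ i := by ring
    have h5 : 3 ^ i * (2 * (j + 1) + 1) ≤ 3 ^ i * 3 ^ (k - i) :=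
      Nat.mul_le_mul_left _ (by omega)
    have h6 : 3 ^ i * (2 * (j + 1) + 1) = 2 * 3 ^ i * (j + 1) + 3 ^ i := by ring
    rw [← pow_add, Nat.add_sub_cancel' hi.le] at h5
    omega

theorem Gk_adj {k : ℕ} {u v : Fin (3 ^ k)} :
    (Gk k).Adj u v ↔ ((u : ℕ), (v : ℕ)) ∈ allE k ∨ ((v : ℕ), (u : ℕ)) ∈ allE k := by
  have hb : ∀ a b : Fin (3 ^ k), ((a : ℕ), (b : ℕ)) ∈ allE k → a ≠ b := by
    rintro a b h rfl
    have := (allE_bound h).1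
    simp at this
  have key : ∀ a b : Fin (3 ^ k), ((a : ℕ), (b : ℕ)) ∈ allE k ↔
      (((a : ℕ) + 1 = (b : ℕ)) ∨ ∃ i < k, ∃ j : ℕ, j + 1 < (3 ^ (k - i) + 1) / 2 ∧
        (a : ℕ) ∈ Sset i j ∧ (b : ℕ) ∈ Sset i (j + 1)) := by
    intro a b
    rw [mem_allE]
    simp only [b.isLt, and_true]
  rw [Gk, SimpleGraph.fromRel_adj, ← key, ← key]
  constructor
  · exact fun h => h.2
  · intro h
    refine ⟨?_, h⟩
    rcases h with h | h
    · exact hb _ _ h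
    · exact (hb _ _ h).symm

theorem ncard_edges (k : ℕ) : (Gk k).edgeSet.ncard = (allE k).card := by
  rw [← Set.ncard_coe_finset]
  symm
  refine Set.ncard_congr (fun p hp => s(⟨p.1, (allE_bound (Finset.mem_coe.1 hp)).1.trans
    (allE_bound (Finset.mem_coe.1 hp)).2⟩, ⟨p.2, (allE_bound (Finset.mem_coe.1 hp)).2⟩)) ?_ ?_ ?_
  · intro p hp
    rw [SimpleGraph.mem_edgeSet, Gk_adj]
    exact Or.inl hp
  · rintro ⟨a, b⟩ ⟨c, d⟩ hp hq h
    have h1 := (allE_bound (Finset.mem_coe.1 hp)).1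
    have h2 := (allE_bound (Finset.mem_coe.1 hq)).1
    simp only [Sym2.eq_iff, Fin.mk.injEq] at h h1 h2
    simp only [Prod.mk.injEq]
    omega
  · intro e
    induction e using Sym2.ind with
    | _ u v =>
      intro h
      rw [SimpleGraph.mem_edgeSet, Gk_adj] at h
      rcases h with h | h
      · exact ⟨_, h, rfl⟩
      · exact ⟨_, h, Sym2.eq_swap⟩

/-- For every integer `k ≥ 1`, the number of edges of `G_k` equals
`(8·4^k − 3·3^k − 5)/6`. -/
theorem stmt_8 (k : ℕ) (hk : 1 ≤ k) :
    ((Gk k).edgeSet.ncard : ℚ) =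
      (8 * 4 ^ k - 3 * 3 ^ k - 5) / 6 := by
  rw [ncard_edges]
  have h := card_allE k
  have h' : (6 * ((allE k).card : ℚ) + 3 * 3 ^ k + 5) = 8 * 4 ^ k := by exact_mod_cast h
  linarith
end

section
/- For every natural number r there exists a natural number k₀ such that for every k ≥ k₀, every bipartition of the vertex set {0, 1, …, 3^k − 1} of G_k into sets A and B with |A| ≥ 3^k/3 and |B| ≥ 3^k/3 has biadjacency matrix over ℤ/2 of rank strictly greater than r. -/
open scoped Classical in
/-- The rank over `ℤ/2` of the biadjacency matrix of the bipartition `(A, B)` of the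
vertex set of `G`: the `A × B` matrix whose `(a, b)` entry is `1` if `a` and `b` are
adjacent and `0` otherwise.  (It is encoded as a `V × V` matrix padded with zeros
outside `A × B`, which has the same rank.) -/
noncomputable def biadjRank {V : Type*} [Fintype V] (G : SimpleGraph V)
    (A B : Set V) : ℕ :=
  (Matrix.of fun a b : V =>
    if a ∈ A ∧ b ∈ B ∧ G.Adj a b then (1 : ZMod 2) else 0).rank


open scoped Classical in
lemma rank_lower {V : Type*} [Fintype V] (G : SimpleGraph V) (A B : Set V)
    {ι : Type*} [Fintype ι] [LinearOrder ι] (f g : ι → V)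
    (hf : ∀ i, f i ∈ A) (hg : ∀ i, g i ∈ B) (hd : ∀ i, G.Adj (f i) (g i))
    (hn : ∀ i j, i < j → ¬ G.Adj (f i) (g j)) : Fintype.card ι ≤ biadjRank G A B := by
  unfold biadjRank
  set M : Matrix V V (ZMod 2) := (Matrix.of fun a b : V =>
    if a ∈ A ∧ b ∈ B ∧ G.Adj a b then (1 : ZMod 2) else 0) with hM
  have h1 : (M.submatrix f g).det = 1 := by
    rw [Matrix.det_of_isLowerTriangular]
    · apply Finset.prod_eq_one
      intro i _
      simp [hM, hf, hg, hd]
    · intro i j hij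
      have : i < j := by simpa using hij
      simp [hM, hn i j this]
  have h2 : (M.submatrix f g).rank = Fintype.card ι := by
    apply Matrix.rank_of_isUnit
    rw [Matrix.isUnit_iff_isUnit_det, h1]
    exact isUnit_one
  rw [← h2]
  exact Matrix.rank_submatrix_le M f g

open scoped Classical in
lemma rank_lower' {V : Type*} [Fintype V] (G : SimpleGraph V) (A B : Set V)
    {ι : Type*} [Fintype ι] [LinearOrder ι] (f g : ι → V)
    (hf : ∀ i, f i ∈ A) (hg : ∀ i, g i ∈ B) (hd : ∀ i, G.Adj (f i) (g i))
    (hn : ∀ i j, i < j → ¬ G.Adj (f j) (g i)) : Fintype.card ι ≤ biadjRank G A B := by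
  have := rank_lower G A B (ι := ιᵒᵈ) (fun i => f (OrderDual.ofDual i))
    (fun i => g (OrderDual.ofDual i)) (fun i => hf _) (fun i => hg _) (fun i => hd _)
    (fun i j hij => hn _ _ hij)
  simpa using this

lemma Sset_bd : ∀ (i j x : ℕ), x ∈ Sset i j → 2 * j * 3 ^ i ≤ x ∧ x < (2 * j + 1) * 3 ^ i := by
  intro i
  induction i with
  | zero => intro j x h; simp [Sset] at h; omega
  | succ i ih =>
    intro j x h
    simp only [Sset, Finset.mem_union] at h
    have hp : 0 < 3 ^ i := by positivity
    rw [pow_succ]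
    rcases h with h | h
    · have := ih _ _ h
      constructor <;> nlinarith
    · have := ih _ _ h
      constructor <;> nlinarith

lemma Sset_even : ∀ (i j x : ℕ), x ∈ Sset i j → x % 2 = 0 := by
  intro i
  induction i with
  | zero => intro j x h; simp [Sset] at h; omega
  | succ i ih =>
    intro j x h
    simp only [Sset, Finset.mem_union] at h
    rcases h with h | h <;> exact ih _ _ h

lemma Sset_min : ∀ (i j : ℕ), 2 * j * 3 ^ i ∈ Sset i j := by
  intro i
  induction i with
  | zero => intro j; simp [Sset]
  | succ i ih =>
    intro j
    simp only [Sset, Finset.mem_union]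
    left
    have := ih (3 * j)
    convert this using 1
    ring

lemma Sset_max : ∀ (i j : ℕ), (2 * j + 1) * 3 ^ i - 1 ∈ Sset i j := by
  intro i
  induction i with
  | zero => intro j; simp [Sset]
  | succ i ih =>
    intro j
    simp only [Sset, Finset.mem_union]
    right
    have := ih (3 * j + 1)
    convert this using 2
    ring

lemma Sset_inj {i j q x : ℕ} (h : x ∈ Sset i j) (h' : x ∈ Sset i q) : j = q := by
  have h1 := Sset_bd _ _ _ h
  have h2 := Sset_bd _ _ _ h'
  have a1 : 2 * j < 2 * q + 1 := lt_of_mul_lt_mul_right (lt_of_le_of_lt h1.1 h2.2) (Nat.zero_le _)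
  have a2 : 2 * q < 2 * j + 1 := lt_of_mul_lt_mul_right (lt_of_le_of_lt h2.1 h1.2) (Nat.zero_le _)
  omega

lemma Sset_anc (i x : ℕ) : ∀ (d j : ℕ), x ∈ Sset (i + d + 1) j → ∃ q, x ∈ Sset i q ∧ q % 3 ≠ 2 := by
  intro d
  induction d with
  | zero =>
    intro j h
    simp only [Sset, Finset.mem_union] at h
    rcases h with h | h
    · exact ⟨_, h, by omega⟩
    · exact ⟨_, h, by omega⟩
  | succ d ih =>
    intro j h
    rw [show i + (d + 1) + 1 = (i + d + 1) + 1 by ring] at h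
    rw [Sset, Finset.mem_union] at h
    rcases h with h | h
    · exact ih _ h
    · exact ih _ h

lemma Sset_dead {i m x : ℕ} (h : x ∈ Sset i m) (hm : m % 3 = 2) (l j : ℕ) (hl : i < l) :
    x ∉ Sset l j := by
  intro h'
  obtain ⟨d, rfl⟩ : ∃ d, l = i + d + 1 := ⟨l - i - 1, by omega⟩
  obtain ⟨q, hq, hq'⟩ := Sset_anc i x d j h'
  have := Sset_inj h hq
  omega

lemma not_adj_far {k : ℕ} (u v : Fin (3 ^ k)) (i : ℕ) (huv : (u : ℕ) + 3 * 3 ^ i ≤ v)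
    (hd : (∀ l j, i < l → (u : ℕ) ∉ Sset l j) ∨ (∀ l j, i < l → (v : ℕ) ∉ Sset l j)) :
    ¬ (Gk k).Adj u v := by
  have hp : 0 < 3 ^ i := by positivity
  intro h
  simp only [Gk, SimpleGraph.fromRel_adj] at h
  obtain ⟨_, (h | ⟨l, _, j, _, h1, h2⟩) | (h | ⟨l, _, j, _, h1, h2⟩)⟩ := h
  · omega
  · have hl : l ≤ i := by
      by_contra hl
      push Not at hl
      rcases hd with hd | hd
      · exact hd _ _ hl h1
      · exact hd _ _ hl h2
    have b1 := Sset_bd _ _ _ h1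
    have b2 := Sset_bd _ _ _ h2
    have : 3 ^ l ≤ 3 ^ i := Nat.pow_le_pow_right (by norm_num) hl
    nlinarith
  · omega
  · have b1 := Sset_bd _ _ _ h1
    have b2 := Sset_bd _ _ _ h2
    have : 0 < 3 ^ l := by positivity
    nlinarith

lemma adj_odd {k : ℕ} (u v : Fin (3 ^ k)) (hu : (u : ℕ) % 2 = 1) (h : (Gk k).Adj u v) :
    (u : ℕ) + 1 = v ∨ (v : ℕ) + 1 = u := by
  simp only [Gk, SimpleGraph.fromRel_adj] at h
  obtain ⟨_, (h | ⟨l, _, j, _, h1, h2⟩) | (h | ⟨l, _, j, _, h1, h2⟩)⟩ := h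
  · exact Or.inl h
  · have := Sset_even _ _ _ h1; omega
  · exact Or.inr h
  · have := Sset_even _ _ _ h2; omega

lemma adj_succ {k : ℕ} (u v : Fin (3 ^ k)) (h : (u : ℕ) + 1 = v) : (Gk k).Adj u v := by
  simp only [Gk, SimpleGraph.fromRel_adj]
  refine ⟨?_, Or.inl (Or.inl h)⟩
  intro e
  rw [e] at h
  omega

lemma adj_level {k : ℕ} (u v : Fin (3 ^ k)) (i m : ℕ) (hu : (u : ℕ) = 2 * m * 3 ^ i)
    (hv : (v : ℕ) = (2 * m + 3) * 3 ^ i - 1) : (Gk k).Adj u v := by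
  have hp : 0 < 3 ^ i := by positivity
  have hvlt := v.2
  have hlt : (2 * m + 3) * 3 ^ i ≤ 3 ^ k := by omega
  have hik : i < k := by
    by_contra hik
    push Not at hik
    have : 3 ^ k ≤ 3 ^ i := Nat.pow_le_pow_right (by norm_num) hik
    nlinarith
  simp only [Gk, SimpleGraph.fromRel_adj]
  refine ⟨?_, Or.inl (Or.inr ⟨i, hik, m, ?_, ?_, ?_⟩)⟩
  · intro e
    rw [e] at hu
    have : (2 * m + 3) * 3 ^ i = 2 * m * 3 ^ i + 3 * 3 ^ i := by ring
    omega
  · have e : 3 ^ k = 3 ^ (k - i) * 3 ^ i := by rw [← pow_add]; congr 1; omega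
    rw [e] at hlt
    have := Nat.le_of_mul_le_mul_right hlt hp
    omega
  · rw [hu]; exact Sset_min i m
  · rw [hv]; exact Sset_max i (m + 1)

lemma pair_exists (p e : ℕ) (hp : 54 * 3 ^ e ≤ p) : ∃ i m a b : ℕ, i ≤ e + 2 ∧ m % 3 ≠ 0 ∧
    a = 2 * m * 3 ^ i ∧ b = (2 * m + 3) * 3 ^ i - 1 ∧ a + 3 ^ e ≤ p ∧ p < a + 27 * 3 ^ e ∧
    p + 3 ^ e ≤ b ∧ b < p + 27 * 3 ^ e := by
  have hu : 0 < 3 ^ e := by positivity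
  obtain ⟨y, hy⟩ : ∃ y, y = p / 3 ^ e := ⟨_, rfl⟩
  have y1 : y * 3 ^ e ≤ p := by rw [hy]; exact Nat.div_mul_le_self _ _
  have y2 : p < (y + 1) * 3 ^ e := by
    rw [hy, mul_comm]; exact Nat.lt_mul_div_succ _ hu
  have y3 : 54 ≤ y := by rw [hy]; exact (Nat.le_div_iff_mul_le hu).2 hp
  have key : (∃ m, m % 3 ≠ 0 ∧ 6 * m + 1 ≤ y ∧ y ≤ 6 * m + 7) ∨
      (∃ m, m % 3 ≠ 0 ∧ 18 * m + 1 ≤ y ∧ y ≤ 18 * m + 25) := by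
    by_contra hc
    push Not at hc
    have c1 := hc.1 ((y - 1) / 6)
    have c2 := hc.1 ((y - 1) / 6 - 1)
    have c3 := hc.2 ((y - 1) / 18)
    have c4 := hc.2 ((y - 1) / 18 - 1)
    omega
  rcases key with ⟨m, hm, m1, m2⟩ | ⟨m, hm, m1, m2⟩
  · refine ⟨e + 1, m, _, _, by omega, hm, rfl, rfl, ?_⟩
    have e1 : 2 * m * 3 ^ (e + 1) = (6 * m) * 3 ^ e := by ring
    have e2 : (2 * m + 3) * 3 ^ (e + 1) = (6 * m) * 3 ^ e + 9 * 3 ^ e := by ring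
    rw [e1, e2]
    have f1 : (6 * m + 1) * 3 ^ e ≤ y * 3 ^ e := Nat.mul_le_mul_right _ m1
    have f2 : y * 3 ^ e ≤ (6 * m + 7) * 3 ^ e := Nat.mul_le_mul_right _ m2
    rw [add_mul] at f1 f2 y2
    omega
  · refine ⟨e + 2, m, _, _, by omega, hm, rfl, rfl, ?_⟩
    have e1 : 2 * m * 3 ^ (e + 2) = (18 * m) * 3 ^ e := by ring
    have e2 : (2 * m + 3) * 3 ^ (e + 2) = (18 * m) * 3 ^ e + 27 * 3 ^ e := by ring
    rw [e1, e2]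
    have f1 : (18 * m + 1) * 3 ^ e ≤ y * 3 ^ e := Nat.mul_le_mul_right _ m1
    have f2 : y * 3 ^ e ≤ (18 * m + 25) * 3 ^ e := Nat.mul_le_mul_right _ m2
    rw [add_mul] at f1 f2 y2
    omega

/-- Given a clean cut around `p` over many scales, the rank is large. -/
lemma rank_of_cut (r k s p : ℕ) (A B : Set (Fin (3 ^ k)))
    (hp : 3 ^ (s + (6 * r + 9)) ≤ p) (hpk : p + 3 ^ (s + (6 * r + 9)) ≤ 3 ^ k)
    (hL : ∀ x : Fin (3 ^ k), p < x + 3 ^ (s + (6 * r + 9)) → x + 3 ^ s ≤ p → x ∈ A)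
    (hR : ∀ x : Fin (3 ^ k), p + 3 ^ s ≤ x → x < p + 3 ^ (s + (6 * r + 9)) → x ∈ B) :
    r < biadjRank (Gk k) A B ∧ r < biadjRank (Gk k) B A := by
  have hT : ∀ t : Fin (2 * r + 2), ∃ (i m : ℕ) (a b : Fin (3 ^ k)), i ≤ s + 3 * t + 2 ∧ m % 3 ≠ 0 ∧
      (a : ℕ) = 2 * m * 3 ^ i ∧ (b : ℕ) = (2 * m + 3) * 3 ^ i - 1 ∧
      a + 3 ^ (s + 3 * t) ≤ p ∧ p + 3 ^ (s + 3 * t) ≤ b ∧ a ∈ A ∧ b ∈ B := by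
    intro t
    have ht := t.2
    have hle : 81 * 3 ^ (s + 3 * (t : ℕ)) ≤ 3 ^ (s + (6 * r + 9)) := by
      rw [show 81 = 3 ^ 4 by norm_num, ← pow_add]
      exact Nat.pow_le_pow_right (by norm_num) (by omega)
    have hge : 3 ^ s ≤ 3 ^ (s + 3 * (t : ℕ)) := Nat.pow_le_pow_right (by norm_num) (by omega)
    obtain ⟨i, m, a, b, h1, h2, h3, h4, h5, h6, h7, h8⟩ := pair_exists p (s + 3 * t) (by omega)
    exact ⟨i, m, ⟨a, by omega⟩, ⟨b, by omega⟩, h1, h2, h3, h4, h5, h7,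
      hL _ (by simp only; omega) (by simp only; omega),
      hR _ (by simp only; omega) (by simp only; omega)⟩
  choose i m a b h1 h2 h3 h4 h5 h6 h7 h8 using hT
  have hadj : ∀ t, (Gk k).Adj (a t) (b t) := fun t => adj_level _ _ _ _ (h3 t) (h4 t)
  have hma : ∀ t, ((a t : ℕ)) ∈ Sset (i t) (m t) := fun t => by rw [h3]; exact Sset_min _ _
  have hmb : ∀ t, ((b t : ℕ)) ∈ Sset (i t) (m t + 1) := fun t => by
    rw [h4]; exact Sset_max _ (m t + 1)
  have hpow : ∀ t t' : Fin (2 * r + 2), t < t' → 3 * 3 ^ i t ≤ 3 ^ (s + 3 * (t' : ℕ)) := by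
    intro t t' htt
    have htt' : (t : ℕ) < t' := htt
    rw [← pow_succ']
    exact Nat.pow_le_pow_right (by norm_num) (by have := h1 t; omega)
  have hna : ∀ t t', m t % 3 = 2 → t < t' → ¬ (Gk k).Adj (a t) (b t') := by
    intro t t' hm htt
    apply not_adj_far _ _ (i t)
    · have := hpow t t' htt
      have : 0 < 3 ^ (s + 3 * (t : ℕ)) := by positivity
      have := h5 t
      have := h6 t'
      omega
    · left
      intro l j hl
      exact Sset_dead (hma t) hm l j hl
  have hnb : ∀ t t', m t % 3 = 1 → t < t' → ¬ (Gk k).Adj (a t') (b t) := by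
    intro t t' hm htt
    apply not_adj_far _ _ (i t)
    · have := hpow t t' htt
      have : 0 < 3 ^ (s + 3 * (t : ℕ)) := by positivity
      have := h5 t'
      have := h6 t
      omega
    · right
      intro l j hl
      exact Sset_dead (hmb t) (by omega) l j hl
  have hcard : r + 1 ≤ Fintype.card {t // m t % 3 = 2} ∨ r + 1 ≤ Fintype.card {t // ¬ m t % 3 = 2} := by
    have := Fintype.card_subtype_compl (fun t => m t % 3 = 2)
    have h' := Fintype.card_subtype_le (fun t => m t % 3 = 2)
    simp only [Fintype.card_fin] at this h'
    omega
  rcases hcard with hc | hc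
  · constructor
    · exact lt_of_lt_of_le hc (rank_lower (Gk k) A B (fun t : {t // m t % 3 = 2} => a t.1)
        (fun t => b t.1) (fun t => h7 _) (fun t => h8 _) (fun t => hadj _)
        (fun t t' htt => hna _ _ t.2 htt))
    · exact lt_of_lt_of_le hc (rank_lower' (Gk k) B A (fun t : {t // m t % 3 = 2} => b t.1)
        (fun t => a t.1) (fun t => h8 _) (fun t => h7 _) (fun t => (hadj _).symm)
        (fun t t' htt h => hna _ _ t.2 htt h.symm))
  · have hm1 : ∀ t : {t // ¬ m t % 3 = 2}, m t.1 % 3 = 1 := fun t => by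
      have := h2 t.1
      have := t.2
      omega
    constructor
    · exact lt_of_lt_of_le hc (rank_lower' (Gk k) A B (fun t : {t // ¬ m t % 3 = 2} => a t.1)
        (fun t => b t.1) (fun t => h7 _) (fun t => h8 _) (fun t => hadj _)
        (fun t t' htt => hnb _ _ (hm1 t) htt))
    · exact lt_of_lt_of_le hc (rank_lower (Gk k) B A (fun t : {t // ¬ m t % 3 = 2} => b t.1)
        (fun t => a t.1) (fun t => h8 _) (fun t => h7 _) (fun t => (hadj _).symm)
        (fun t t' htt h => hnb _ _ (hm1 t) htt h.symm))

open scoped Classical in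
/-- Many colour changes along the path force large rank. -/
lemma rank_of_changes (r k : ℕ) (A B : Set (Fin (3 ^ k)))
    (hAB : A ∪ B = Set.univ) (C : Finset ℕ)
    (hC : ∀ m ∈ C, m + 1 < 3 ^ k ∧
      ¬ ((∃ h : m < 3 ^ k, (⟨m, h⟩ : Fin (3 ^ k)) ∈ A) ↔
        (∃ h : m + 1 < 3 ^ k, (⟨m + 1, h⟩ : Fin (3 ^ k)) ∈ A)))
    (hcard : 8 * (r + 1) ≤ C.card) : r < biadjRank (Gk k) A B := by
  have hB : ∀ x, x ∉ A → x ∈ B := by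
    intro x hx
    have : x ∈ A ∪ B := by rw [hAB]; trivial
    rcases this with h | h
    · exact absurd h hx
    · exact h
  obtain ⟨⟨c, bit⟩, -, hc⟩ := Finset.exists_le_card_fiber_of_mul_le_card_of_maps_to
    (s := C) (t := (Finset.univ : Finset (Fin 4 × Bool)))
    (f := fun m => ((⟨m % 4, Nat.mod_lt _ (by norm_num)⟩ : Fin 4),
      decide (∃ h : m < 3 ^ k, (⟨m, h⟩ : Fin (3 ^ k)) ∈ A))) (n := r + 1)
    (fun _ _ => Finset.mem_univ _) ⟨(0, true), Finset.mem_univ _⟩ (by simpa using hcard)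
  set F := {x ∈ C | ((⟨x % 4, Nat.mod_lt _ (by norm_num)⟩ : Fin 4),
      decide (∃ h : x < 3 ^ k, (⟨x, h⟩ : Fin (3 ^ k)) ∈ A)) = (c, bit)} with hF
  have hFm : ∀ x : F, x.1 ∈ C ∧ x.1 % 4 = c ∧
      decide (∃ h : x.1 < 3 ^ k, (⟨x.1, h⟩ : Fin (3 ^ k)) ∈ A) = bit := by
    intro x
    have := (Finset.mem_filter.1 x.2)
    rw [Prod.mk.injEq, Fin.ext_iff] at this
    exact this
  have hlt : ∀ x : F, x.1 + 1 < 3 ^ k := fun x => (hC _ (hFm x).1).1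
  have hcF : r + 1 ≤ Fintype.card F := by simpa using hc
  let p : F → Fin (3 ^ k) := fun x => ⟨x.1, by have := hlt x; omega⟩
  let q : F → Fin (3 ^ k) := fun x => ⟨x.1 + 1, hlt x⟩
  have hadj : ∀ x, (Gk k).Adj (p x) (q x) := fun x => adj_succ _ _ rfl
  have hnadj : ∀ x y, x ≠ y → ¬ (Gk k).Adj (p x) (q y) := by
    intro x y hxy h
    have hne : x.1 ≠ y.1 := fun e => hxy (Subtype.ext e)
    have h1 := (hFm x).2.1
    have h2 := (hFm y).2.1
    rcases Nat.mod_two_eq_zero_or_one x.1 with e | e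
    · have := adj_odd (q y) (p x) (by simp only [q]; omega) h.symm
      simp only [p, q] at this
      omega
    · have := adj_odd (p x) (q y) (by simp only [p]; omega) h
      simp only [p, q] at this
      omega
  cases hb : bit with
  | true =>
    have hA : ∀ x, p x ∈ A := fun x => by
      have := (hFm x).2.2
      rw [hb, decide_eq_true_eq] at this
      exact this.2
    have hB' : ∀ x, q x ∈ B := fun x => by
      apply hB
      intro h
      exact (hC _ (hFm x).1).2 ⟨fun _ => ⟨_, h⟩, fun _ => ⟨_, hA x⟩⟩
    exact lt_of_lt_of_le hcF (rank_lower (Gk k) A B p q hA hB' hadj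
      (fun x y h => hnadj x y h.ne))
  | false =>
    have hA' : ∀ x, p x ∉ A := fun x h => by
      have := (hFm x).2.2
      rw [hb, decide_eq_false_iff_not] at this
      exact this ⟨_, h⟩
    have hA : ∀ x, q x ∈ A := fun x => by
      by_contra h
      exact (hC _ (hFm x).1).2 ⟨fun h' => absurd h'.2 (hA' x), fun h' => absurd h'.2 h⟩
    exact lt_of_lt_of_le hcF (rank_lower (Gk k) A B q p hA (fun x => hB _ (hA' x))
      (fun x => (hadj x).symm) (fun x y h h' => hnadj y x h.ne' h'.symm))

lemma scale_exists (D : Finset ℕ) (W : ℕ) : ∃ t ≤ D.card, ∀ d ∈ D,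
    d < 3 ^ (t * W) ∨ 3 ^ (t * W + W) ≤ d := by
  have : ¬ (Finset.range (D.card + 1) ⊆ D.image (fun d => Nat.log 3 d / W)) := by
    intro h
    have h1 := Finset.card_le_card h
    have h2 : (D.image (fun d => Nat.log 3 d / W)).card ≤ D.card := Finset.card_image_le
    rw [Finset.card_range] at h1
    omega
  rw [Finset.not_subset] at this
  obtain ⟨t, ht, ht'⟩ := this
  refine ⟨t, by rw [Finset.mem_range] at ht; omega, fun d hd => ?_⟩
  by_contra hc
  push Not at hc
  apply ht'
  rw [Finset.mem_image]
  refine ⟨d, hd, ?_⟩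
  have hd0 : d ≠ 0 := by
    have : 0 < 3 ^ (t * W) := by positivity
    omega
  have l1 : t * W ≤ Nat.log 3 d := (Nat.le_log_iff_pow_le (by norm_num) hd0).2 hc.1
  have l2 : Nat.log 3 d < t * W + W := (Nat.log_lt_iff_lt_pow (by norm_num) hd0).2 hc.2
  apply Nat.div_eq_of_lt_le
  · exact l1
  · rw [add_mul, one_mul]; exact l2

lemma col_const (col : ℕ → Prop) (x y : ℕ) (hxy : x ≤ y)
    (h : ∀ m, x ≤ m → m < y → (col m ↔ col (m + 1))) : col x ↔ col y := by
  induction y, hxy using Nat.le_induction with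
  | base => rfl
  | succ y hy ih =>
    exact (ih (fun m h1 h2 => h m h1 (by omega))).trans (h y hy (by omega))

/-- From deep points of both colours, get a clean cut. -/
lemma cut_exists (n U V : ℕ) (col : ℕ → Prop) (C' : Finset ℕ) (hU : 0 < U) (hUV : 4 * U ≤ V)
    (h0 : 0 ∈ C') (hn : n ∈ C')
    (hC : ∀ m, m + 1 < n → m ∉ C' → (col m ↔ col (m + 1)))
    (hgap : ∀ a ∈ C', ∀ b ∈ C', a ≤ b → b < a + U ∨ a + V ≤ b)
    (x y : ℕ) (hy : y < n) (hxy : x < y) (hcol : ¬ (col x ↔ col y))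
    (hx' : ∀ a ∈ C', a + U ≤ x ∨ x + U ≤ a) (hy' : ∀ a ∈ C', a + U ≤ y ∨ y + U ≤ a) :
    ∃ p X, V ≤ p ∧ p + V ≤ n ∧ (∀ z, p < z + V → z + U ≤ p → (col z ↔ X)) ∧
      (∀ z, p + U ≤ z → z < p + V → (col z ↔ ¬ X)) := by
  classical
  -- take the maximal deep point before `y` with colour different from `y`
  obtain ⟨x, ⟨hxy, hcol, hx'⟩, hmax⟩ : ∃ x, (x < y ∧ ¬ (col x ↔ col y) ∧
      ∀ a ∈ C', a + U ≤ x ∨ x + U ≤ a) ∧ ∀ z, x < z → ¬ (z < y ∧ ¬ (col z ↔ col y) ∧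
      ∀ a ∈ C', a + U ≤ z ∨ z + U ≤ a) := by
    set P : ℕ → Prop := fun x => (x < y ∧ ¬ (col x ↔ col y) ∧
      ∀ a ∈ C', a + U ≤ x ∨ x + U ≤ a) with hP
    refine ⟨Nat.findGreatest P y, Nat.findGreatest_spec (P := P) hxy.le ⟨hxy, hcol, hx'⟩, ?_⟩
    intro z hz hPz
    exact Nat.findGreatest_is_greatest hz hPz.1.le hPz
  have hex : ∃ m, m ∈ C' ∧ x ≤ m ∧ m < y := by
    by_contra hc
    push Not at hc
    apply hcol
    apply col_const col x y hxy.le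
    intro m h1 h2
    exact hC m (by omega) (fun h => by have := hc m h h1; omega)
  obtain ⟨p, ⟨hpC, hxp, hpy⟩, hpmin⟩ : ∃ p, (p ∈ C' ∧ x ≤ p ∧ p < y) ∧
      ∀ m, m < p → ¬ (m ∈ C' ∧ x ≤ m ∧ m < y) :=
    ⟨Nat.find hex, Nat.find_spec hex, fun m hm => Nat.find_min hex hm⟩
  have p1 : x + U ≤ p := by have := hx' p hpC; omega
  have p2 : p + U ≤ y := by have := hy' p hpC; omega
  have hVp : V ≤ p := by have := hgap 0 h0 p hpC (by omega); omega
  have hpV : p + V ≤ n := by have := hgap p hpC n hn (by omega); omega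
  have hleft : ∀ z, p < z + V → z + U ≤ p → (col z ↔ col x) := by
    intro z h1 h2
    have e1 : col z ↔ col (p - U) := by
      apply col_const col z (p - U) (by omega)
      intro m m1 m2
      apply hC m (by omega)
      intro hm
      have := hgap m hm p hpC (by omega)
      omega
    have e2 : col x ↔ col (p - U) := by
      apply col_const col x (p - U) (by omega)
      intro m m1 m2
      apply hC m (by omega)
      intro hm
      exact hpmin m (by omega) ⟨hm, m1, by omega⟩
    rw [e1, e2]
  have hright : ∀ z, p + U ≤ z → z < p + V → (col z ↔ col (p + U)) := by
    intro z h1 h2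
    symm
    apply col_const col _ _ h1
    intro m m1 m2
    apply hC m (by omega)
    intro hm
    have := hgap p hpC m hm (by omega)
    omega
  refine ⟨p, col x, hVp, hpV, hleft, ?_⟩
  have key : ¬ (col (p + U) ↔ col x) := by
    intro hk
    by_cases hyc : y < p + V
    · exact hcol (((hright y p2 hyc).trans hk).symm)
    · have e := hright (p + 2 * U) (by omega) (by omega)
      apply hmax (p + 2 * U) (by omega)
      refine ⟨by omega, ?_, ?_⟩
      · rw [e, hk]; exact hcol
      · intro a ha
        rcases le_total a p with h | h
        · omega
        · have := hgap p hpC a ha h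
          omega
  intro z h1 h2
  rw [hright z h1 h2]
  tauto

lemma deep_exists (U : ℕ) (C' S : Finset ℕ) (h : C'.card * (2 * U) < S.card) :
    ∃ x ∈ S, ∀ a ∈ C', a + U ≤ x ∨ x + U ≤ a := by
  by_contra hc
  push Not at hc
  have hsub : S ⊆ C'.biUnion (fun a => Finset.Ico (a - U) (a + U)) := by
    intro x hx
    obtain ⟨a, ha, h1, h2⟩ := hc x hx
    rw [Finset.mem_biUnion]
    exact ⟨a, ha, by rw [Finset.mem_Ico]; omega⟩
  have h1 := Finset.card_le_card hsub
  have h2 : (C'.biUnion (fun a => Finset.Ico (a - U) (a + U))).card ≤ C'.card * (2 * U) := by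
    apply Finset.card_biUnion_le_card_mul
    intro a _
    rw [Nat.card_Ico]
    omega
  omega

/-- For every natural number `r` there exists `k₀` such that for
every `k ≥ k₀`, every bipartition of the vertex set of `G_k` into sets `A` and `B`
with `|A| ≥ 3^k/3` and `|B| ≥ 3^k/3` has biadjacency matrix over `ℤ/2` of rank
strictly greater than `r`. -/
theorem stmt_9 (r : ℕ) :
    ∃ k₀ : ℕ, ∀ k : ℕ, k₀ ≤ k →
      ∀ A B : Set (Fin (3 ^ k)), A ∪ B = Set.univ → A ∩ B = ∅ →
        (3 : ℝ) ^ k / 3 ≤ (A.ncard : ℝ) → (3 : ℝ) ^ k / 3 ≤ (B.ncard : ℝ) →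
        r < biadjRank (Gk k) A B := by
  classical
  obtain ⟨N, hN⟩ : ∃ N, N = 8 * (r + 1) + 2 := ⟨_, rfl⟩
  obtain ⟨W, hW⟩ : ∃ W, W = 6 * r + 9 := ⟨_, rfl⟩
  refine ⟨N * N * W + N * 2 + 1, ?_⟩
  intro k hk A B hAB hABe hA hB
  by_contra hr
  obtain ⟨col, hcol⟩ : ∃ col : ℕ → Prop, col =
    fun x => ∃ h : x < 3 ^ k, (⟨x, h⟩ : Fin (3 ^ k)) ∈ A := ⟨_, rfl⟩
  obtain ⟨C, hC⟩ : ∃ C, C = (Finset.range (3 ^ k)).filter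
    (fun m => m + 1 < 3 ^ k ∧ ¬ (col m ↔ col (m + 1))) := ⟨_, rfl⟩
  have hCc : C.card < 8 * (r + 1) := by
    by_contra hc
    push Not at hc
    apply hr
    apply rank_of_changes r k A B hAB C _ hc
    intro m hm
    rw [hC, Finset.mem_filter, hcol] at hm
    exact hm.2
  obtain ⟨C', hC'⟩ : ∃ C', C' = insert 0 (insert (3 ^ k) C) := ⟨_, rfl⟩
  have hCc' : C'.card ≤ N := by
    have h1 := Finset.card_insert_le 0 (insert (3 ^ k) C)
    have h2 := Finset.card_insert_le (3 ^ k) C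
    rw [hC']
    omega
  obtain ⟨t, ht, hgap⟩ := scale_exists (Finset.image₂ (fun a b => b - a) C' C') W
  have ht' : t ≤ N * N := ht.trans ((Finset.card_image₂_le _ _ _).trans (Nat.mul_le_mul hCc' hCc'))
  obtain ⟨s, hs⟩ : ∃ s, s = t * W := ⟨_, rfl⟩
  rw [← hs] at hgap
  have hsk : s ≤ N * N * W := by rw [hs]; exact Nat.mul_le_mul_right _ ht'
  have hsize : C'.card * (2 * 3 ^ s) < 3 ^ (k - 1) := by
    calc C'.card * (2 * 3 ^ s) ≤ N * (2 * 3 ^ s) := Nat.mul_le_mul_right _ hCc'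
      _ = (N * 2) * 3 ^ s := by ring
      _ < 3 ^ (N * 2) * 3 ^ s := by
        apply Nat.mul_lt_mul_of_pos_right (Nat.lt_pow_self (by norm_num)) (by positivity)
      _ = 3 ^ (N * 2 + s) := by rw [pow_add]
      _ ≤ 3 ^ (k - 1) := Nat.pow_le_pow_right (by norm_num) (by omega)
  have hk1 : (3 : ℝ) ^ k / 3 = ((3 ^ (k - 1) : ℕ) : ℝ) := by
    obtain ⟨k', rfl⟩ : ∃ k', k = k' + 1 := ⟨k - 1, by omega⟩
    push_cast
    rw [pow_succ]
    simp
  rw [hk1] at hA hB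
  have hA' : 3 ^ (k - 1) ≤ A.ncard := by exact_mod_cast hA
  have hB' : 3 ^ (k - 1) ≤ B.ncard := by exact_mod_cast hB
  have hBA : ∀ x, x ∈ B ↔ x ∉ A := by
    intro x
    constructor
    · intro h h'
      have : x ∈ A ∩ B := ⟨h', h⟩
      rw [hABe] at this
      exact this
    · intro h
      have : x ∈ A ∪ B := by rw [hAB]; trivial
      exact this.resolve_left h
  have hcolA : ∀ x : Fin (3 ^ k), col x ↔ x ∈ A := by
    intro x
    rw [hcol]
    exact ⟨fun h => h.2, fun h => ⟨x.2, h⟩⟩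
  have hSA : A.ncard ≤ ((Finset.range (3 ^ k)).filter (fun x => col x)).card := by
    rw [← Set.ncard_image_of_injective A Fin.val_injective, ← Set.ncard_coe_finset]
    apply Set.ncard_le_ncard _ (Finset.finite_toSet _)
    rintro _ ⟨x, hx, rfl⟩
    simp only [Finset.coe_filter, Finset.mem_range, Set.mem_ofPred_eq]
    exact ⟨x.2, (hcolA x).2 hx⟩
  have hSB : B.ncard ≤ ((Finset.range (3 ^ k)).filter (fun x => ¬ col x)).card := by
    rw [← Set.ncard_image_of_injective B Fin.val_injective, ← Set.ncard_coe_finset]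
    apply Set.ncard_le_ncard _ (Finset.finite_toSet _)
    rintro _ ⟨x, hx, rfl⟩
    simp only [Finset.coe_filter, Finset.mem_range, Set.mem_ofPred_eq]
    exact ⟨x.2, fun h => (hBA x).1 hx ((hcolA x).1 h)⟩
  obtain ⟨x, hx, hxd⟩ := deep_exists (3 ^ s) C' _ (hsize.trans_le (hA'.trans hSA))
  obtain ⟨y, hy, hyd⟩ := deep_exists (3 ^ s) C' _ (hsize.trans_le (hB'.trans hSB))
  rw [Finset.mem_filter, Finset.mem_range] at hx hy
  have hU : 0 < 3 ^ s := by positivity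
  have hUV : 4 * 3 ^ s ≤ 3 ^ (s + W) := by
    have : 3 ^ (s + 2) ≤ 3 ^ (s + W) := Nat.pow_le_pow_right (by norm_num) (by omega)
    rw [pow_add] at this
    omega
  have h0 : 0 ∈ C' := by rw [hC']; simp
  have hn : 3 ^ k ∈ C' := by rw [hC']; simp
  have hCC : ∀ m, m + 1 < 3 ^ k → m ∉ C' → (col m ↔ col (m + 1)) := by
    intro m hm hmC
    by_contra hc
    apply hmC
    rw [hC', Finset.mem_insert, Finset.mem_insert]
    right; right
    rw [hC, Finset.mem_filter, Finset.mem_range]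
    exact ⟨by omega, hm, hc⟩
  have hgap' : ∀ a ∈ C', ∀ b ∈ C', a ≤ b → b < a + 3 ^ s ∨ a + 3 ^ (s + W) ≤ b := by
    intro a ha b hb hab
    have := hgap (b - a) (Finset.mem_image₂_of_mem ha hb)
    omega
  have hcut : ∃ p X, 3 ^ (s + W) ≤ p ∧ p + 3 ^ (s + W) ≤ 3 ^ k ∧
      (∀ z, p < z + 3 ^ (s + W) → z + 3 ^ s ≤ p → (col z ↔ X)) ∧
      (∀ z, p + 3 ^ s ≤ z → z < p + 3 ^ (s + W) → (col z ↔ ¬ X)) := by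
    rcases lt_trichotomy x y with h | h | h
    · exact cut_exists _ _ _ col C' hU hUV h0 hn hCC hgap' x y hy.1 h (by tauto) hxd hyd
    · rw [h] at hx
      exact absurd hx.2 hy.2
    · exact cut_exists _ _ _ col C' hU hUV h0 hn hCC hgap' y x hx.1 h (by tauto) hyd hxd
  obtain ⟨p, X, hp1, hp2, hl, hrr⟩ := hcut
  rw [hW] at hp1 hp2 hl hrr
  by_cases hX : X
  · exact hr (rank_of_cut r k s p A B hp1 hp2
      (fun z h1 h2 => (hcolA z).1 ((hl z h1 h2).2 hX))
      (fun z h1 h2 => (hBA z).2 (fun h => (hrr z h1 h2).1 ((hcolA z).2 h) hX))).1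
  · exact hr (rank_of_cut r k s p B A hp1 hp2
      (fun z h1 h2 => (hBA z).2 (fun h => hX ((hl z h1 h2).1 ((hcolA z).2 h))))
      (fun z h1 h2 => (hcolA z).1 ((hrr z h1 h2).2 hX))).2
end

section
/- The graphs G_k have unbounded rank-width: for every natural number r there exists k ≥ 1 such that for every finite tree T in which every vertex has degree 1 or 3 and whose leaves are in bijection with the vertex set of G_k, some edge e of T induces a bipartition of the vertices of G_k whose biadjacency matrix over ℤ/2 has rank strictly greater than r. -/
/-- The lowest `t` ternary digits of `n` are all different from `2`. -/
def Dg (t n : ℕ) : Prop := ∀ i < t, n / 3 ^ i % 3 ≠ 2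

/-- Adjacency of two even vertices, given by their halves (directed). -/
def Nadj (n n' : ℕ) : Prop := ∃ t, Dg t n ∧ Dg t n' ∧ n / 3 ^ t + 1 = n' / 3 ^ t

lemma Dg_mul (t n : ℕ) : Dg t (3 ^ t * n) := by
  intro i hi
  obtain ⟨d, rfl⟩ := Nat.exists_eq_add_of_lt hi
  have : 3 ^ (i + d + 1) * n = 3 ^ i * (3 * (3 ^ d * n)) := by ring
  rw [this, Nat.mul_div_cancel_left _ (by positivity)]
  omega

lemma Dg_mul_add (t n : ℕ) : Dg (t + 1) (3 ^ (t + 1) * n + 3 ^ t) := by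
  intro i hi
  have h1 : 3 ^ (t + 1) * n + 3 ^ t = 3 ^ t * (3 * n + 1) := by ring
  rw [h1]
  rcases Nat.lt_succ_iff_lt_or_eq.mp hi with h | h
  · exact Dg_mul t _ i h
  · subst h
    rw [Nat.mul_div_cancel_left _ (by positivity)]
    omega

lemma not_Nadj {u v i : ℕ} (hd : u / 3 ^ i % 3 = 2 ∨ v / 3 ^ i % 3 = 2)
    (hg : ∀ t ≤ i, u / 3 ^ t + 2 ≤ v / 3 ^ t) : ¬ Nadj u v := by
  rintro ⟨t, h1, h2, h3⟩
  by_cases ht : t ≤ i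
  · have := hg t ht
    omega
  · rcases hd with hd | hd
    · exact h1 i (by omega) hd
    · exact h2 i (by omega) hd

lemma div_succ_le {p u X : ℕ} (hp : 0 < p) (h : u + p ≤ X) : u / p + 1 ≤ X / p := by
  rw [← Nat.add_div_right u hp]
  exact Nat.div_le_div_right h

lemma div_succ_le' {p v X : ℕ} (hp : 0 < p) (hv : p ∣ v) (h : X < v) : X / p + 1 ≤ v / p := by
  obtain ⟨w, rfl⟩ := hv
  rw [Nat.mul_div_cancel_left _ hp]
  exact Nat.div_lt_of_lt_mul h

lemma gap1 {p u v X : ℕ} (hp : 0 < p) (hu : u + p ≤ X) (hv : p ∣ v) (h : X < v) :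
    u / p + 2 ≤ v / p := by
  have := div_succ_le hp hu
  have := div_succ_le' hp hv h
  omega

lemma gap2 {p u v v' X : ℕ} (hp : 0 < p) (hu : u ≤ X) (hv : p ∣ v') (h : X < v')
    (hv' : v' + p ≤ v) : u / p + 2 ≤ v / p := by
  have := Nat.div_le_div_right (c := p) hu
  have := div_succ_le' hp hv h
  have := div_succ_le hp hv'
  omega

lemma core (T : ℕ) : ∃ M : ℕ, ∀ X, M ≤ X → ∃ (S : Finset ℕ) (u v : ℕ → ℕ), T ≤ S.card ∧
    (∀ i ∈ S, X ≤ u i + M ∧ u i ≤ X ∧ X < v i ∧ v i ≤ X + M ∧ Nadj (u i) (v i)) ∧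
    ((∀ i ∈ S, ∀ l ∈ S, i < l → ¬ Nadj (u i) (v l)) ∨
     (∀ i ∈ S, ∀ l ∈ S, i < l → ¬ Nadj (u l) (v i))) := by
  refine ⟨2 * 3 ^ (6 * T + 2), fun X hX => ?_⟩
  let d : ℕ → ℕ := fun i => X / 3 ^ i % 3
  let φ : ℕ → ℕ := fun j => if d (2 * j + 1) ≠ 0 then 2 * j + 1 else 2 * j + 2
  have hφ1 : ∀ j, φ j = 2 * j + 1 ∨ φ j = 2 * j + 2 := by
    intro j; simp only [φ]; split_ifs <;> simp
  have hφm : ∀ i l, i < l → φ i < φ l := by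
    intro i l h
    have := hφ1 i; have := hφ1 l; omega
  have hφ0 : ∀ j, d (φ j) = 0 → d (φ j - 1) = 0 := by
    intro j hj
    by_cases h : d (2 * j + 1) = 0
    · have : φ j = 2 * j + 2 := by simp [φ, h]
      rw [this]; exact h
    · have : φ j = 2 * j + 1 := by simp [φ, h]
      rw [this] at hj; exact absurd hj h
  have hpos : ∀ i : ℕ, 0 < 3 ^ i := fun i => by positivity
  have hq : ∀ i, 3 ^ i * (X / 3 ^ i) ≤ X := fun i => Nat.mul_div_le X _
  have hq' : ∀ i, X < 3 ^ i * (X / 3 ^ i + 1) := fun i => Nat.lt_mul_div_succ X (hpos i)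
  have hbd : ∀ j ∈ Finset.range (3 * T), 3 ^ φ j ≤ 3 ^ (6 * T + 2) := by
    intro j hj
    rw [Finset.mem_range] at hj
    apply Nat.pow_le_pow_right (by norm_num)
    have := hφ1 j; omega
  have hφs : ∀ j, ∃ e, φ j = e + 1 := fun j => ⟨φ j - 1, by have := hφ1 j; omega⟩
  obtain ⟨y, hy, hyc⟩ := Finset.exists_le_card_fiber_of_mul_le_card_of_maps_to
    (s := Finset.range (3 * T)) (t := Finset.range 3) (f := fun j => d (φ j)) (n := T)
    (fun j _ => Finset.mem_range.mpr (Nat.mod_lt _ (by norm_num))) (by simp) (by simp)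
  have hmem : ∀ i ∈ (Finset.range (3 * T)).filter (fun j => d (φ j) = y),
      i ∈ Finset.range (3 * T) ∧ X / 3 ^ φ i % 3 = y := fun i hi => Finset.mem_filter.mp hi
  have hy3 : y = 0 ∨ y = 1 ∨ y = 2 := by rw [Finset.mem_range] at hy; omega
  rcases hy3 with rfl | rfl | rfl
  · -- digit 0
    refine ⟨_, fun j => 3 ^ φ j * (X / 3 ^ φ j - 1),
      fun j => 3 ^ φ j * (X / 3 ^ φ j) + 3 ^ (φ j - 1), hyc, ?_, Or.inl ?_⟩
    all_goals
      have hone : ∀ j ∈ Finset.range (3 * T), 1 ≤ X / 3 ^ φ j := by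
        intro j hj
        rw [Nat.one_le_div_iff (hpos _)]
        have := hbd j hj; omega
      have hv : ∀ j, d (φ j) = 0 → X < 3 ^ φ j * (X / 3 ^ φ j) + 3 ^ (φ j - 1) := by
        intro j hj
        have h0 := hφ0 j hj
        obtain ⟨e, he⟩ := hφs j
        rw [he] at h0 ⊢
        simp only [Nat.add_sub_cancel] at h0 ⊢
        have h1 := hq' e
        have h2 : X / 3 ^ (e + 1) = X / 3 ^ e / 3 := by rw [pow_succ, Nat.div_div_eq_div_mul]
        rw [h2]
        have h3 : X / 3 ^ e = 3 * (X / 3 ^ e / 3) := by simp only [d] at h0; omega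
        calc X < 3 ^ e * (X / 3 ^ e + 1) := h1
          _ = 3 ^ e * (3 * (X / 3 ^ e / 3) + 1) := by rw [← h3]
          _ = _ := by ring
    · intro j hj
      obtain ⟨hj, hjd⟩ := hmem j hj
      have h1 := hone j hj
      have h2 := hbd j hj
      have h3 := hq (φ j)
      have h4 := hq' (φ j)
      have h5 := hv j hjd
      have h6 : 3 ^ (φ j - 1) ≤ 3 ^ φ j := Nat.pow_le_pow_right (by norm_num) (by omega)
      obtain ⟨e, he⟩ := hφs j
      obtain ⟨w, hw⟩ := Nat.exists_eq_add_of_le' h1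
      refine ⟨?_, ?_, h5, ?_, φ j, Dg_mul _ _, ?_, ?_⟩
      · dsimp only
        rw [hw] at h4 ⊢; simp only [Nat.add_sub_cancel]; nlinarith
      · dsimp only
        rw [hw] at h3 ⊢; simp only [Nat.add_sub_cancel]; nlinarith
      · dsimp only; omega
      · dsimp only; rw [he]; exact Dg_mul_add _ _
      · dsimp only
        rw [Nat.mul_div_cancel_left _ (hpos _), Nat.mul_add_div (hpos _),
          Nat.div_eq_of_lt (Nat.pow_lt_pow_right (by norm_num) (by omega))]
        omega
    · intro i hi l hl hil
      obtain ⟨hi, hid⟩ := hmem i hi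
      obtain ⟨hl, hld⟩ := hmem l hl
      have h1 := hone i hi
      have hlt := hφm i l hil
      have h5 := hv l hld
      have h3 := hq (φ i)
      obtain ⟨w, hw⟩ := Nat.exists_eq_add_of_le' h1
      apply not_Nadj (i := φ i)
      · left
        rw [Nat.mul_div_cancel_left _ (hpos _)]
        omega
      · intro t ht
        apply gap1 (hpos t) (X := X) _ _ h5
        · have : 3 ^ t ≤ 3 ^ φ i := Nat.pow_le_pow_right (by norm_num) ht
          dsimp only
          rw [hw] at h3 ⊢; simp only [Nat.add_sub_cancel]; nlinarith
        · apply dvd_add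
          · exact Dvd.dvd.mul_right (pow_dvd_pow 3 (by omega)) _
          · exact pow_dvd_pow 3 (by omega)
  · -- digit 1
    refine ⟨_, fun j => 3 ^ φ j * (X / 3 ^ φ j),
      fun j => 3 ^ φ j * (X / 3 ^ φ j + 1), hyc, ?_, Or.inr ?_⟩
    · intro j hj
      obtain ⟨hj, hjd⟩ := hmem j hj
      have h2 := hbd j hj
      have h3 := hq (φ j)
      have h4 := hq' (φ j)
      refine ⟨?_, h3, h4, ?_, φ j, Dg_mul _ _, Dg_mul _ _, ?_⟩
      · dsimp only; nlinarith
      · dsimp only; nlinarith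
      · dsimp only
        rw [Nat.mul_div_cancel_left _ (hpos _), Nat.mul_div_cancel_left _ (hpos _)]
    · intro i hi l hl hil
      obtain ⟨hi, hid⟩ := hmem i hi
      obtain ⟨hl, hld⟩ := hmem l hl
      have hlt := hφm i l hil
      have h3 := hq (φ i)
      apply not_Nadj (i := φ i)
      · right
        rw [Nat.mul_div_cancel_left _ (hpos _)]
        omega
      · intro t ht
        apply gap1 (hpos t) (X := X) _ _ (hq' _)
        · have h6 : 3 ^ t ≤ 3 ^ φ i := Nat.pow_le_pow_right (by norm_num) ht
          obtain ⟨e, he⟩ := Nat.exists_eq_add_of_lt hlt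
          have h7 : X / 3 ^ φ l = X / 3 ^ φ i / 3 ^ (e + 1) := by
            rw [Nat.div_div_eq_div_mul, ← pow_add, he, add_assoc]
          have h8 := Nat.mul_div_le (X / 3 ^ φ i) (3 ^ (e + 1))
          dsimp only
          rw [h7]
          set q := X / 3 ^ φ i
          have h9 : 3 ^ (e + 1) * (q / 3 ^ (e + 1)) ≠ q := by
            intro h
            have : 3 ∣ q := by
              rw [← h, pow_succ]; exact Dvd.dvd.mul_right (Dvd.intro_left _ rfl) _
            omega
          have h10 : 3 ^ (e + 1) * (q / 3 ^ (e + 1)) + 1 ≤ q := by omega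
          have h11 : 3 ^ φ l = 3 ^ φ i * 3 ^ (e + 1) := by rw [← pow_add, he, add_assoc]
          rw [h11, mul_assoc]
          calc _ ≤ 3 ^ φ i * (3 ^ (e + 1) * (q / 3 ^ (e + 1))) + 3 ^ φ i := by omega
            _ = 3 ^ φ i * (3 ^ (e + 1) * (q / 3 ^ (e + 1)) + 1) := by ring
            _ ≤ 3 ^ φ i * q := Nat.mul_le_mul_left _ h10
            _ ≤ X := h3
        · exact Dvd.dvd.mul_right (pow_dvd_pow 3 (by omega)) _
  · -- digit 2
    refine ⟨_, fun j => 3 ^ φ j * (X / 3 ^ φ j),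
      fun j => 3 ^ φ j * (X / 3 ^ φ j + 1) + 3 ^ (φ j - 1), hyc, ?_, Or.inl ?_⟩
    · intro j hj
      obtain ⟨hj, hjd⟩ := hmem j hj
      have h2 := hbd j hj
      have h3 := hq (φ j)
      have h4 := hq' (φ j)
      have h6 : 3 ^ (φ j - 1) ≤ 3 ^ φ j := Nat.pow_le_pow_right (by norm_num) (by omega)
      obtain ⟨e, he⟩ := hφs j
      refine ⟨?_, h3, ?_, ?_, φ j, Dg_mul _ _, ?_, ?_⟩
      · dsimp only; nlinarith
      · exact Nat.lt_of_lt_of_le h4 (Nat.le_add_right _ _)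
      · dsimp only; nlinarith
      · dsimp only; rw [he]; exact Dg_mul_add _ _
      · dsimp only
        rw [Nat.mul_div_cancel_left _ (hpos _), Nat.mul_add_div (hpos _),
          Nat.div_eq_of_lt (Nat.pow_lt_pow_right (by norm_num) (by omega))]
    · intro i hi l hl hil
      obtain ⟨hi, hid⟩ := hmem i hi
      obtain ⟨hl, hld⟩ := hmem l hl
      have hlt := hφm i l hil
      have h3 := hq (φ i)
      apply not_Nadj (i := φ i)
      · left
        rw [Nat.mul_div_cancel_left _ (hpos _)]
        omega
      · intro t ht
        apply gap2 (hpos t) (X := X) h3 _ (hq' (φ l))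
        · have h6 : 3 ^ t ≤ 3 ^ (φ l - 1) := Nat.pow_le_pow_right (by norm_num) (by omega)
          dsimp only
          omega
        · exact Dvd.dvd.mul_right (pow_dvd_pow 3 (by omega)) _

lemma Dg_shift (s t u : ℕ) : Dg (s + t) (3 ^ s * u) ↔ Dg t u := by
  have key : ∀ i, 3 ^ s * u / 3 ^ (s + i) = u / 3 ^ i := by
    intro i; rw [pow_add, Nat.mul_div_mul_left _ _ (by positivity)]
  constructor
  · intro h i hi
    have := h (s + i) (by omega)
    rwa [key] at this
  · intro h i hi
    by_cases his : i < s
    · exact Dg_mul s u i his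
    · obtain ⟨e, rfl⟩ := Nat.exists_eq_add_of_le (Nat.le_of_not_lt his)
      rw [key]; exact h e (by omega)

lemma Nadj_shift (s u v : ℕ) : Nadj (3 ^ s * u) (3 ^ s * v) ↔ Nadj u v := by
  have key : ∀ u i, 3 ^ s * u / 3 ^ (s + i) = u / 3 ^ i := by
    intro u i; rw [pow_add, Nat.mul_div_mul_left _ _ (by positivity)]
  constructor
  · rintro ⟨t, h1, h2, h3⟩
    by_cases hts : t < s
    · exfalso
      obtain ⟨d, rfl⟩ := Nat.exists_eq_add_of_lt hts
      have : ∀ n, 3 ^ (t + d + 1) * n = 3 ^ t * (3 * (3 ^ d * n)) := by intro n; ring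
      rw [this, this, Nat.mul_div_cancel_left _ (by positivity),
        Nat.mul_div_cancel_left _ (by positivity)] at h3
      omega
    · obtain ⟨e, rfl⟩ := Nat.exists_eq_add_of_le (Nat.le_of_not_lt hts)
      rw [Dg_shift] at h1 h2
      rw [key, key] at h3
      exact ⟨e, h1, h2, h3⟩
  · rintro ⟨t, h1, h2, h3⟩
    exact ⟨s + t, (Dg_shift _ _ _).2 h1, (Dg_shift _ _ _).2 h2, by rw [key, key]; exact h3⟩

lemma biadjRank_comm {V : Type*} [Fintype V] (G : SimpleGraph V) (A B : Set V) :
    biadjRank G A B = biadjRank G B A := by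
  classical
  unfold biadjRank
  rw [← Matrix.rank_transpose]
  congr 1
  ext a b
  simp only [Matrix.transpose_apply, Matrix.of_apply]
  congr 1
  rw [G.adj_comm]
  exact propext (by tauto)

/-- A triangular pattern of adjacencies forces large cut-rank. -/
lemma card_le_biadjRank {V : Type*} [Fintype V] (G : SimpleGraph V) (A B : Set V)
    (S : Finset ℕ) (x y : ℕ → V) (hx : ∀ i ∈ S, x i ∈ A) (hy : ∀ i ∈ S, y i ∈ B)
    (hadj : ∀ i ∈ S, G.Adj (x i) (y i))
    (hn : ∀ i ∈ S, ∀ l ∈ S, i < l → ¬ G.Adj (x i) (y l)) : S.card ≤ biadjRank G A B := by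
  classical
  unfold biadjRank
  set N : Matrix V V (ZMod 2) := Matrix.of fun a b : V =>
    if a ∈ A ∧ b ∈ B ∧ G.Adj a b then (1 : ZMod 2) else 0 with hN
  let P : Matrix S S (ZMod 2) := N.submatrix (fun i => x i) (fun i => y i)
  have hdet : P.det = 1 := by
    rw [Matrix.det_of_isLowerTriangular]
    · apply Finset.prod_eq_one
      intro i _
      simp [P, hN, hx i i.2, hy i i.2, hadj i i.2]
    · intro i l h
      have h' : (i : ℕ) < l := h
      simp [P, hN, hn i i.2 l l.2 h']
  have h1 : P.rank = S.card := by
    rw [Matrix.rank_of_det_ne_zero (by rw [hdet]; exact one_ne_zero)]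
    simp
  rw [← h1]
  exact Matrix.rank_submatrix_le N _ _

lemma card_le_biadjRank' {V : Type*} [Fintype V] (G : SimpleGraph V) (A B : Set V)
    (S : Finset ℕ) (x y : ℕ → V) (hx : ∀ i ∈ S, x i ∈ A) (hy : ∀ i ∈ S, y i ∈ B)
    (hadj : ∀ i ∈ S, G.Adj (x i) (y i))
    (hn : (∀ i ∈ S, ∀ l ∈ S, i < l → ¬ G.Adj (x i) (y l)) ∨
      (∀ i ∈ S, ∀ l ∈ S, i < l → ¬ G.Adj (x l) (y i))) : S.card ≤ biadjRank G A B := by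
  rcases hn with hn | hn
  · exact card_le_biadjRank G A B S x y hx hy hadj hn
  · rw [biadjRank_comm]
    exact card_le_biadjRank G B A S y x hy hx (fun i hi => (hadj i hi).symm)
      (fun i hi l hl h h' => hn i hi l hl h h'.symm)

/-- Positions of colour changes in an interval. -/
def chg (c : ℕ → Bool) (p q : ℕ) : Finset ℕ := (Finset.Ico p q).filter fun n => c n ≠ c (n + 1)

lemma chg_mono {c : ℕ → Bool} {p q p' q' : ℕ} (h1 : p' ≤ p) (h2 : q ≤ q') :
    chg c p q ⊆ chg c p' q' := by
  intro n
  simp only [chg, Finset.mem_filter, Finset.mem_Ico]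
  rintro ⟨⟨h, h'⟩, h''⟩
  exact ⟨⟨by omega, by omega⟩, h''⟩

lemma exists_chg {c : ℕ → Bool} {p q : ℕ} (hpq : p ≤ q) (h : c p ≠ c q) :
    (chg c p q).Nonempty := by
  induction q, hpq using Nat.le_induction with
  | base => exact absurd rfl h
  | succ q hq ih =>
    by_cases h' : c p = c q
    · exact ⟨q, by simp only [chg, Finset.mem_filter, Finset.mem_Ico]; exact ⟨⟨hq, by omega⟩, h' ▸ h⟩⟩
    · exact (ih h').mono (chg_mono le_rfl (by omega))

lemma chg_add {c : ℕ → Bool} {p x q : ℕ} (h1 : p ≤ x) (h2 : x ≤ q) :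
    (chg c p x).card + (chg c x q).card ≤ (chg c p q).card := by
  rw [← Finset.card_union_of_disjoint]
  · exact Finset.card_le_card (Finset.union_subset (chg_mono le_rfl h2) (chg_mono h1 le_rfl))
  · rw [Finset.disjoint_left]
    intro n
    simp only [chg, Finset.mem_filter, Finset.mem_Ico]
    omega

lemma exists_run (c : ℕ → Bool) (a : Bool) (K N : ℕ) : ∀ m p, (chg c p N).card ≤ m →
    (m + 1) * K < ((Finset.Ico p N).filter fun n => c n = a).card →
    ∃ u, p ≤ u ∧ u + K ≤ N ∧ ∀ n, u ≤ n → n < u + K → c n = a := by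
  intro m
  induction m with
  | zero =>
    intro p hm hc
    have hne : ((Finset.Ico p N).filter fun n => c n = a).Nonempty :=
      Finset.card_pos.mp (by omega)
    obtain ⟨q, hq⟩ := hne
    simp only [Finset.mem_filter, Finset.mem_Ico] at hq
    have hcst : ∀ n, p ≤ n → n < N → c n = c p := by
      intro n hn hn'
      by_contra h
      obtain ⟨z, hz⟩ := exists_chg hn (Ne.symm h)
      have := chg_mono (c := c) (le_refl p) hn'.le hz
      rw [Finset.card_eq_zero.mp (Nat.le_zero.mp hm)] at this
      simp at this
    have hcard := Finset.card_le_card (Finset.filter_subset (fun n => c n = a) (Finset.Ico p N))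
    rw [Nat.card_Ico] at hcard
    refine ⟨p, le_rfl, by omega, fun n hn hn' => ?_⟩
    rw [hcst n hn (by omega), ← hcst q hq.1.1 hq.1.2, hq.2]
  | succ m ih =>
    intro p hm hc
    have hne : ((Finset.Ico p N).filter fun n => c n = a).Nonempty :=
      Finset.card_pos.mp (by omega)
    let q := ((Finset.Ico p N).filter fun n => c n = a).min' hne
    have hq := Finset.min'_mem _ hne
    change q ∈ _ at hq
    simp only [Finset.mem_filter, Finset.mem_Ico] at hq
    have hsub : ((Finset.Ico p N).filter fun n => c n = a) ⊆
        (Finset.Ico q N).filter fun n => c n = a := by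
      intro n hn
      have h1 : q ≤ n := Finset.min'_le _ _ hn
      simp only [Finset.mem_filter, Finset.mem_Ico] at hn ⊢
      exact ⟨⟨h1, hn.1.2⟩, hn.2⟩
    have hc2 := lt_of_lt_of_le hc (Finset.card_le_card hsub)
    have hcard := Finset.card_le_card (Finset.filter_subset (fun n => c n = a) (Finset.Ico q N))
    rw [Nat.card_Ico] at hcard
    have hqK : q + K ≤ N := by
      have : (m + 1 + 1) * K = (m + 1) * K + K := by ring
      omega
    by_cases hrun : ∀ n, q ≤ n → n < q + K → c n = a
    · exact ⟨q, hq.1.1, hqK, hrun⟩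
    · push Not at hrun
      obtain ⟨n, h1, h2, h3⟩ := hrun
      have h4 : (chg c q n).Nonempty := exists_chg h1 (by rw [hq.2]; exact Ne.symm h3)
      have h5 := Finset.card_pos.mpr h4
      have h6 := chg_add (c := c) (p := q) (x := q + K) (q := N) (by omega) hqK
      have h7 := Finset.card_le_card (chg_mono (c := c) (le_refl q) (show n ≤ q + K by omega))
      have h8 := Finset.card_le_card (chg_mono (c := c) hq.1.1 (le_refl N))
      obtain ⟨u, hu1, hu2, hu3⟩ := ih (q + K) (by omega) (by
        have : (Finset.Ico q N).filter (fun n => c n = a) ⊆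
            Finset.Ico q (q + K) ∪ (Finset.Ico (q + K) N).filter (fun n => c n = a) := by
          intro z hz
          simp only [Finset.mem_filter, Finset.mem_Ico, Finset.mem_union] at hz ⊢
          by_cases hz' : z < q + K
          · left; omega
          · right; exact ⟨⟨by omega, hz.1.2⟩, hz.2⟩
        have h9 := (Finset.card_le_card this).trans (Finset.card_union_le _ _)
        rw [Nat.card_Ico] at h9
        have : (m + 1 + 1) * K = (m + 1) * K + K := by ring
        omega)
      exact ⟨u, by omega, hu2, hu3⟩

lemma exists_pow_ge (n : ℕ) : ∃ s, n ≤ 2 * 3 ^ s :=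
  ⟨n, by have := Nat.lt_pow_self (n := n) (show 1 < 3 by norm_num); omega⟩

/-- At some scale, the two colours meet at a single change, with room `M` on both sides. -/
def Concl (M : ℕ) (c : ℕ → Bool) (z : ℕ) : Prop :=
  ∃ (s X : ℕ) (a : Bool), M ≤ X ∧ 2 * 3 ^ s * (X + M) < z ∧
      (∀ n, X ≤ n + M → n ≤ X → c (2 * 3 ^ s * n) = a) ∧
      (∀ n, X < n → n ≤ X + M → c (2 * 3 ^ s * n) = !a)

lemma Concl.mono {M : ℕ} {c : ℕ → Bool} {z z' : ℕ} (h : Concl M c z) (hz : z ≤ z') :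
    Concl M c z' := by
  obtain ⟨s, X, a, h1, h2, h3⟩ := h
  exact ⟨s, X, a, h1, by omega, h3⟩

lemma concl_final (M s : ℕ) (c : ℕ → Bool) (a : Bool) (u y K Q : ℕ) (hQ : Q = 2 * 3 ^ s)
    (hK : K = Q * (M + 2)) (huy : u + K ≤ y)
    (hu : ∀ n, u ≤ n → n < u + K → c n = a)
    (hy : ∀ n, y ≤ n → n < y + K → c n = !a)
    (hgap : y ≤ u + K + Q) : Concl M c (y + K) := by
  have hQ0 : 0 < Q := by rw [hQ]; positivity
  have hK0 : K = Q * M + 2 * Q := by rw [hK]; ring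
  obtain ⟨X0, h1, h2⟩ : ∃ X0, Q * X0 < u + K ∧ u + K ≤ Q * X0 + Q := by
    refine ⟨(u + K - 1) / Q, ?_, ?_⟩
    · have := Nat.mul_div_le (u + K - 1) Q
      omega
    · have := Nat.lt_mul_div_succ (u + K - 1) hQ0
      rw [mul_add, mul_one] at this
      omega
  have hMX : M + 1 ≤ X0 := by
    have : Q * (M + 1) ≤ Q * X0 := by
      have : Q * (M + 1) = Q * M + Q := by ring
      omega
    exact Nat.le_of_mul_le_mul_left this hQ0
  have lo : ∀ n, X0 ≤ n + M → u ≤ Q * n := by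
    intro n hn
    have := Nat.mul_le_mul_left Q hn
    rw [mul_add] at this
    omega
  have hi : ∀ n, n ≤ X0 → Q * n < u + K := by
    intro n hn
    have := Nat.mul_le_mul_left Q hn
    omega
  have lo2 : ∀ n, X0 + 2 ≤ n → y ≤ Q * n := by
    intro n hn
    have := Nat.mul_le_mul_left Q hn
    rw [mul_add] at this
    omega
  have hi2 : ∀ n, n ≤ X0 + 1 + M → Q * n < y + K := by
    intro n hn
    have := Nat.mul_le_mul_left Q hn
    rw [mul_add, mul_add] at this
    omega
  by_cases hc : Q * (X0 + 1) < y ∧ c (Q * (X0 + 1)) = a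
  · refine ⟨s, X0 + 1, a, by omega, ?_, ?_, ?_⟩
    · rw [← hQ]; exact hi2 _ le_rfl
    · intro n hn hn'
      rw [← hQ]
      rcases Nat.lt_or_ge n (X0 + 1) with h | h
      · exact hu _ (lo n (by omega)) (hi n (by omega))
      · have : n = X0 + 1 := by omega
        rw [this]; exact hc.2
    · intro n hn hn'
      rw [← hQ]
      exact hy _ (lo2 n (by omega)) (hi2 n hn')
  · refine ⟨s, X0, a, by omega, ?_, ?_, ?_⟩
    · rw [← hQ]; exact hi2 _ (by omega)
    · intro n hn hn'
      rw [← hQ]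
      exact hu _ (lo n (by omega)) (hi n (by omega))
    · intro n hn hn'
      rw [← hQ]
      rcases Nat.lt_or_ge n (X0 + 2) with h | h
      · have : n = X0 + 1 := by omega
        subst this
        by_cases hlt : Q * (X0 + 1) < y
        · have : c (Q * (X0 + 1)) ≠ a := fun h => hc ⟨hlt, h⟩
          exact Bool.eq_not.mpr this
        · exact hy _ (by omega) (hi2 _ (by omega))
      · exact hy _ (lo2 n h) (hi2 n (by omega))

/-- `K` is a suitable run length for colourings with fewer than `m` changes in the gap. -/
def GapOK (M m K : ℕ) : Prop := ∀ (c : ℕ → Bool) (a : Bool) (u y : ℕ), u + K ≤ y →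
    (∀ n, u ≤ n → n < u + K → c n = a) → (∀ n, y ≤ n → n < y + K → c n = !a) →
    (chg c (u + K) y).card < m → Concl M c (y + K)

lemma gap_step (M m R : ℕ) (h : GapOK M m R) (hR : 0 < R) :
    ∃ K, 0 < K ∧ GapOK M (m + 1) K := by
  obtain ⟨s, hs⟩ := exists_pow_ge (2 * ((m + 1) * R) + 1)
  obtain ⟨Q, hQ⟩ : ∃ Q, Q = 2 * 3 ^ s := ⟨_, rfl⟩
  obtain ⟨K, hK⟩ : ∃ K, K = Q * (M + 2) := ⟨_, rfl⟩
  rw [← hQ] at hs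
  have hK0 : K = Q * M + 2 * Q := by rw [hK]; ring
  have hRm : (m + 1) * R = m * R + R := by ring
  have hRK : R ≤ K := by omega
  refine ⟨K, by omega, ?_⟩
  suffices H : ∀ (g : ℕ) (c : ℕ → Bool) (a : Bool) (u y : ℕ), y = u + K + g →
    (∀ n, u ≤ n → n < u + K → c n = a) → (∀ n, y ≤ n → n < y + K → c n = !a) →
    (chg c (u + K) y).card < m + 1 → Concl M c (y + K) by
    intro c a u y huy
    exact H (y - (u + K)) c a u y (by omega)
  intro g
  induction g with
  | zero =>
    intro c a u y hg hu hy hm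
    exact concl_final M s c a u y K Q hQ hK (by omega) hu hy (by omega)
  | succ g ih =>
    intro c a u y hg hu hy hm
    by_cases hgQ : g + 1 ≤ Q
    · exact concl_final M s c a u y K Q hQ hK (by omega) hu hy (by omega)
    by_cases hyt : c (y - 1) = !a
    · refine (ih c a u (y - 1) (by omega) hu ?_ ?_).mono (by omega)
      · intro n hn hn'
        by_cases h' : n = y - 1
        · rw [h', hyt]
        · exact hy n (by omega) (by omega)
      · exact lt_of_le_of_lt (Finset.card_le_card (chg_mono le_rfl (by omega))) hm
    by_cases hut : c (u + K) = a
    · refine ih c a (u + 1) y (by omega) ?_ hy ?_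
      · intro n hn hn'
        by_cases h' : n = u + K
        · rw [h', hut]
        · exact hu n (by omega) (by omega)
      · exact lt_of_le_of_lt (Finset.card_le_card (chg_mono (by omega) le_rfl)) hm
    have hyt' : c (y - 1) = a := by
      cases a <;> simp_all
    have hut' : c (u + K) = !a := Bool.eq_not.mpr hut
    -- find a long run in the gap
    have hrun : ∃ b p, u + K ≤ p ∧ p + R ≤ y ∧ ∀ n, p ≤ n → n < p + R → c n = b := by
      have hsum := Finset.card_filter_add_card_filter_not (s := Finset.Ico (u + K) y)
        (fun n => c n = true)
      simp only [Bool.not_eq_true, Nat.card_Ico] at hsum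
      by_cases h1 : (m + 1) * R < ((Finset.Ico (u + K) y).filter fun n => c n = true).card
      · exact ⟨true, exists_run c true R y m (u + K) (by omega) h1⟩
      · exact ⟨false, exists_run c false R y m (u + K) (by omega) (by omega)⟩
    obtain ⟨b, p, hp1, hp2, hp3⟩ := hrun
    have hpy : p ≤ y - 1 := by omega
    by_cases hb : b = a
    · subst hb
      have hcp := hp3 p le_rfl (by omega)
      have h1 := Finset.card_pos.mpr (exists_chg hp1 (show c (u + K) ≠ c p by
        rw [hut', hcp]; simp))
      have h2 := chg_add (c := c) hp1 (show p ≤ y by omega)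
      have h3 := Finset.card_le_card (chg_mono (c := c) (show p ≤ p + R by omega) (le_refl y))
      refine (h c b p y hp2 hp3 (fun n hn hn' => hy n hn (by omega)) (by omega)).mono (by omega)
    · have hb' : b = !a := Bool.eq_not.mpr hb
      subst hb'
      have hcp := hp3 p le_rfl (by omega)
      have h1 := Finset.card_pos.mpr (exists_chg hpy (show c p ≠ c (y - 1) by
        rw [hyt', hcp]; simp))
      have h2 := chg_add (c := c) hp1 (show p ≤ y by omega)
      have h3 := Finset.card_le_card (chg_mono (c := c) (le_refl p) (show y - 1 ≤ y by omega))
      have e : u + K - R + R = u + K := by omega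
      refine (h c a (u + K - R) p (by omega) (fun n hn hn' => hu n (by omega) (by omega)) hp3
        ?_).mono (by omega)
      rw [e]; omega

lemma gap_lemma (M : ℕ) : ∀ m, ∃ K, 0 < K ∧ GapOK M m K := by
  intro m
  induction m with
  | zero => exact ⟨1, one_pos, fun c a u y _ _ _ h => absurd h (Nat.not_lt_zero _)⟩
  | succ m ih =>
    obtain ⟨R, hR, h⟩ := ih
    exact gap_step M m R h hR

lemma concl_of_balanced (M m : ℕ) : ∃ N0, ∀ N, N0 ≤ N → ∀ c : ℕ → Bool,
    (chg c 0 N).card ≤ m →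
    (∀ a, N ≤ 3 * ((Finset.Ico 0 N).filter fun n => c n = a).card) → Concl M c N := by
  obtain ⟨K, hK, h⟩ := gap_lemma M (m + 1)
  refine ⟨3 * ((m + 1) * K) + 1, fun N hN c hm hc => ?_⟩
  obtain ⟨u, hu1, hu2, hu3⟩ := exists_run c true K N m 0 hm (by have := hc true; omega)
  obtain ⟨v, hv1, hv2, hv3⟩ := exists_run c false K N m 0 hm (by have := hc false; omega)
  have key : ∀ a u v, u ≤ v → u + K ≤ N → v + K ≤ N → (∀ n, u ≤ n → n < u + K → c n = a) →
      (∀ n, v ≤ n → n < v + K → c n = !a) → Concl M c N := by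
    intro a u v huv hu hv hu' hv'
    have : u + K ≤ v := by
      by_contra hlt
      have h1 := hu' v huv (by omega)
      have h2 := hv' v le_rfl (by omega)
      rw [h1] at h2
      simp at h2
    refine (h c a u v this hu' hv' ?_).mono hv
    have := Finset.card_le_card (chg_mono (c := c) (Nat.zero_le (u + K)) (show v ≤ N by omega))
    omega
  rcases le_total u v with huv | huv
  · exact key true u v huv hu2 hv2 hu3 hv3
  · exact key false v u huv hv2 hu2 hv3 hu3

lemma tree_cover {W : Type} {T : SimpleGraph W} {a b v : W}
    (hv : (T.deleteEdges {s(a, b)}).Reachable v b) (hvb : v ≠ b) :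
    ∃ c, T.Adj b c ∧ c ≠ a ∧ (T.deleteEdges {s(b, c)}).Reachable v c := by
  classical
  obtain ⟨p, hp⟩ := hv.symm.exists_isPath
  cases p with
  | nil => exact absurd rfl hvb
  | @cons _ c _ h q =>
    rw [SimpleGraph.Walk.cons_isPath_iff] at hp
    rw [SimpleGraph.deleteEdges_adj] at h
    refine ⟨c, h.1, ?_, ?_⟩
    · rintro rfl
      exact h.2 (by simp [Sym2.eq_swap])
    · apply SimpleGraph.Reachable.symm
      rw [SimpleGraph.reachable_deleteEdges_iff_exists_walk]
      refine ⟨q.mapLe (SimpleGraph.deleteEdges_le _), fun hmem => ?_⟩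
      have := SimpleGraph.Walk.fst_mem_support_of_mem_edges _ hmem
      simp at this
      exact hp.2 this

lemma tree_sub {W : Type} {T : SimpleGraph W} (hT : T.IsTree) {a b c v : W}
    (hbc : T.Adj b c) (hca : c ≠ a)
    (hv : (T.deleteEdges {s(b, c)}).Reachable v c) :
    (T.deleteEdges {s(a, b)}).Reachable v b := by
  classical
  have hbr : ¬ (T.deleteEdges {s(b, c)}).Reachable b c :=
    SimpleGraph.isBridge_iff.mp (SimpleGraph.isAcyclic_iff_forall_adj_isBridge.mp hT.isAcyclic hbc)
  obtain ⟨p⟩ := hv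
  have hcb : (T.deleteEdges {s(a, b)}).Adj c b := by
    rw [SimpleGraph.deleteEdges_adj]
    refine ⟨hbc.symm, ?_⟩
    simp only [Set.mem_singleton_iff, Sym2.eq_iff]
    rintro (⟨h, _⟩ | ⟨h, _⟩)
    · exact hca h
    · exact hbc.ne h.symm
  refine SimpleGraph.Reachable.trans ?_ hcb.reachable
  rw [SimpleGraph.reachable_deleteEdges_iff_exists_walk]
  refine ⟨p.mapLe (SimpleGraph.deleteEdges_le _), fun hmem => ?_⟩
  have h := SimpleGraph.Walk.snd_mem_support_of_mem_edges _ hmem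
  simp at h
  exact hbr ⟨p.dropUntil b h⟩

lemma tree_balanced {W V : Type} [Fintype V] [Finite W] {T : SimpleGraph W} (hT : T.IsTree)
    (hdeg : ∀ w : W, (T.neighborSet w).ncard = 1 ∨ (T.neighborSet w).ncard = 3)
    (f : V → W) (hf : Function.Injective f)
    (hleaf : ∀ w : W, (T.neighborSet w).ncard = 1 ↔ w ∈ Set.range f) (hV : 4 ≤ Fintype.card V) :
    ∃ a b : W, T.Adj a b ∧
      Fintype.card V ≤ 3 * {v | (T.deleteEdges {s(a, b)}).Reachable (f v) b}.ncard ∧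
      3 * {v | (T.deleteEdges {s(a, b)}).Reachable (f v) b}.ncard ≤ 2 * Fintype.card V ∧
      ∀ v, (T.deleteEdges {s(a, b)}).Reachable (f v) a ∨
        (T.deleteEdges {s(a, b)}).Reachable (f v) b := by
  classical
  let side : W → W → Set V := fun a b => {v | (T.deleteEdges {s(a, b)}).Reachable (f v) b}
  let comp : W → W → Set W := fun a b => {w | (T.deleteEdges {s(a, b)}).Reachable w b}
  have hcov : ∀ a b, T.Adj a b → ∀ v, (T.deleteEdges {s(a, b)}).Reachable v a ∨
        (T.deleteEdges {s(a, b)}).Reachable v b := by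
    intro a b hab v
    by_cases hva : v = a
    · left; rw [hva]
    by_contra hcon
    push Not at hcon
    obtain ⟨p, hp⟩ := (hT.connected a v).exists_isPath
    cases p with
    | nil => exact hva rfl
    | @cons _ c _ h q =>
      rw [SimpleGraph.Walk.cons_isPath_iff] at hp
      have hq : ∀ e ∈ q.edges, e ∉ ({s(a, b)} : Set (Sym2 W)) := by
        intro e he he'
        rw [Set.mem_singleton_iff] at he'
        subst he'
        exact hp.2 (SimpleGraph.Walk.fst_mem_support_of_mem_edges _ he)
      have hr : (T.deleteEdges {s(a, b)}).Reachable c v := ⟨q.toDeleteEdges _ hq⟩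
      by_cases hcb : c = b
      · subst hcb; exact hcon.2 hr.symm
      · apply hcon.1
        apply hr.symm.trans
        have : (T.deleteEdges {s(a, b)}).Adj c a := by
          rw [SimpleGraph.deleteEdges_adj]
          refine ⟨h.symm, ?_⟩
          simp only [Set.mem_singleton_iff, Sym2.eq_iff]
          rintro (⟨_, h'⟩ | ⟨h', _⟩)
          · exact absurd (‹_› : c = a) h.ne'
          · exact hcb h'
        exact this.reachable
  -- existence of a heavy directed edge
  have hex : ∃ n, ∃ a b, T.Adj a b ∧ Fintype.card V ≤ 3 * (side a b).ncard ∧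
      (comp a b).ncard = n := by
    have : 0 < Fintype.card V := by omega
    obtain ⟨v0⟩ := Fintype.card_pos_iff.mp this
    have h1 : (T.neighborSet (f v0)).ncard = 1 := (hleaf _).2 ⟨v0, rfl⟩
    obtain ⟨b, hb⟩ := Set.ncard_eq_one.mp h1
    have hab : T.Adj (f v0) b := by
      have : b ∈ T.neighborSet (f v0) := by rw [hb]; rfl
      exact this
    have hun : side (f v0) b ∪ side b (f v0) = Set.univ := by
      ext v
      simp only [Set.mem_union, Set.mem_univ, iff_true]
      rcases hcov _ _ hab (f v) with h | h
      · right
        change (T.deleteEdges {s(b, f v0)}).Reachable (f v) (f v0)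
        rwa [Sym2.eq_swap]
      · left; exact h
    have hc := Set.ncard_union_le (side (f v0) b) (side b (f v0))
    rw [hun, Set.ncard_univ, Nat.card_eq_fintype_card] at hc
    by_cases h : Fintype.card V ≤ 3 * (side (f v0) b).ncard
    · exact ⟨_, _, _, hab, h, rfl⟩
    · exact ⟨_, _, _, hab.symm, by omega, rfl⟩
  obtain ⟨a, b, hab, hheavy, hn⟩ := Nat.find_spec hex
  refine ⟨a, b, hab, hheavy, ?_, fun v => hcov a b hab (f v)⟩
  by_contra hbig
  push Not at hbig
  change 2 * Fintype.card V < 3 * (side a b).ncard at hbig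
  -- `b` is not a leaf
  have hsing : ∀ w : W, (f ⁻¹' {w}).ncard ≤ 1 := by
    intro w
    rw [Set.ncard_le_one_iff]
    intro x y hx hy
    exact hf (hx.trans hy.symm)
  have hb3 : (T.neighborSet b).ncard = 3 := by
    rcases hdeg b with h | h
    · exfalso
      obtain ⟨z, hz⟩ := Set.ncard_eq_one.mp h
      have hza : z = a := by
        have : a ∈ T.neighborSet b := hab.symm
        rw [hz] at this; exact this.symm
      have hsub : side a b ⊆ f ⁻¹' {b} := by
        intro v hv
        by_contra hvb
        obtain ⟨c, hc, hca, _⟩ := tree_cover hv hvb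
        have : c ∈ T.neighborSet b := hc
        rw [hz, hza] at this
        exact hca this
      have := Set.ncard_le_ncard hsub (Set.toFinite _)
      have := hsing b
      omega
    · exact h
  have hbnot : ∀ v, f v ≠ b := by
    intro v hv
    have := (hleaf b).2 ⟨v, hv⟩
    omega
  have hnb : (T.neighborSet b \ {a}).ncard = 2 := by
    rw [Set.ncard_sdiff_singleton_of_mem (show a ∈ T.neighborSet b from hab.symm)]; omega
  obtain ⟨c, d, hcd, hcdset⟩ := Set.ncard_eq_two.mp hnb
  have hsub : side a b ⊆ side b c ∪ side b d := by
    intro v hv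
    obtain ⟨e, he, hea, hr⟩ := tree_cover hv (hbnot v)
    have : e ∈ T.neighborSet b \ {a} := ⟨he, hea⟩
    rw [hcdset] at this
    rcases this with rfl | h
    · left; exact hr
    · right; rw [Set.mem_singleton_iff] at h; subst h; exact hr
  have hle := (Set.ncard_le_ncard hsub (Set.toFinite _)).trans (Set.ncard_union_le _ _)
  have key : ∀ e, e ∈ T.neighborSet b \ {a} → ¬ Fintype.card V ≤ 3 * (side b e).ncard := by
    intro e he hbig'
    have hbe : T.Adj b e := he.1
    have hlt : (comp b e).ncard < (comp a b).ncard := by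
      apply Set.ncard_lt_ncard _ (Set.toFinite _)
      constructor
      · intro w hw
        exact tree_sub hT hbe he.2 hw
      · intro hsub
        have : b ∈ comp b e := hsub (SimpleGraph.Reachable.refl b)
        exact SimpleGraph.isBridge_iff.mp
          (SimpleGraph.isAcyclic_iff_forall_adj_isBridge.mp hT.isAcyclic hbe) this
    rw [hn] at hlt
    exact Nat.find_min hex hlt ⟨b, e, hbe, hbig', rfl⟩
  have h1 := key c (by rw [hcdset]; simp)
  have h2 := key d (by rw [hcdset]; simp)
  omega

lemma mem_Sset (t : ℕ) : ∀ j x, x ∈ Sset t j ↔ ∃ n, x = 2 * n ∧ Dg t n ∧ n / 3 ^ t = j := by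
  induction t with
  | zero =>
    intro j x
    simp only [Sset, Finset.mem_singleton, pow_zero, Nat.div_one]
    constructor
    · intro h; exact ⟨j, h, fun i hi => absurd hi (Nat.not_lt_zero _), rfl⟩
    · rintro ⟨n, h, _, rfl⟩; exact h
  | succ t ih =>
    intro j x
    have hdiv : ∀ n, n / 3 ^ (t + 1) = n / 3 ^ t / 3 := by
      intro n; rw [pow_succ, Nat.div_div_eq_div_mul]
    simp only [Sset, Finset.mem_union, ih]
    constructor
    · rintro (⟨n, h, hD, hj⟩ | ⟨n, h, hD, hj⟩)
      all_goals
        refine ⟨n, h, ?_, by rw [hdiv, hj]; omega⟩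
        intro i hi
        rcases Nat.lt_succ_iff_lt_or_eq.mp hi with h' | h'
        · exact hD i h'
        · rw [h', hj]; omega
    · rintro ⟨n, h, hD, hj⟩
      have h2 := hD t (by omega)
      rw [hdiv] at hj
      have hD' : Dg t n := fun i hi => hD i (by omega)
      have : n / 3 ^ t = 3 * j ∨ n / 3 ^ t = 3 * j + 1 := by omega
      rcases this with h' | h'
      · left; exact ⟨n, h, hD', h'⟩
      · right; exact ⟨n, h, hD', h'⟩

lemma Gk_adj_even {k : ℕ} {u v : Fin (3 ^ k)} {n n' : ℕ} (hu : (u : ℕ) = 2 * n)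
    (hv : (v : ℕ) = 2 * n') (hlt : n < n') : (Gk k).Adj u v ↔ Nadj n n' := by
  unfold Gk
  rw [SimpleGraph.fromRel_adj]
  constructor
  · rintro ⟨_, (h | ⟨i, hi, j, hj, h1, h2⟩) | (h | ⟨i, hi, j, hj, h1, h2⟩)⟩
    · omega
    · rw [mem_Sset] at h1 h2
      obtain ⟨m, e1, d1, q1⟩ := h1
      obtain ⟨m', e2, d2, q2⟩ := h2
      obtain rfl : m = n := by omega
      obtain rfl : m' = n' := by omega
      exact ⟨i, d1, d2, by omega⟩
    · omega
    · rw [mem_Sset] at h1 h2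
      obtain ⟨m', e2, d2, q2⟩ := h1
      obtain ⟨m, e1, d1, q1⟩ := h2
      obtain rfl : m = n := by omega
      obtain rfl : m' = n' := by omega
      have := Nat.div_le_div_right (c := 3 ^ i) hlt.le
      omega
  · rintro ⟨i, d1, d2, q⟩
    have hne : u ≠ v := by
      intro h; rw [h] at hu; omega
    refine ⟨hne, Or.inl (Or.inr ⟨i, ?_, n / 3 ^ i, ?_, ?_, ?_⟩)⟩
    · have h1 : 3 ^ i < 3 ^ k := by
        have := Nat.mul_div_le n' (3 ^ i)
        rw [← q, mul_add] at this
        have := v.2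
        have h0 : 0 < 3 ^ k := by positivity
        omega
      exact (Nat.pow_lt_pow_iff_right (by norm_num)).mp h1
    · have hvk := v.2
      have hik : i < k := by
        have h1 : 3 ^ i < 3 ^ k := by
          have := Nat.mul_div_le n' (3 ^ i)
          rw [← q, mul_add] at this
          omega
        exact (Nat.pow_lt_pow_iff_right (by norm_num)).mp h1
      have h2 : 3 ^ k = 3 ^ i * 3 ^ (k - i) := by rw [← pow_add]; congr 1; omega
      have h3 := Nat.mul_div_le n' (3 ^ i)
      rw [← q] at h3
      have h4 : 3 ^ i * (2 * (n / 3 ^ i + 1)) < 3 ^ i * 3 ^ (k - i) := by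
        rw [← h2]
        have : 3 ^ i * (2 * (n / 3 ^ i + 1)) = 2 * (3 ^ i * (n / 3 ^ i + 1)) := by ring
        omega
      have h5 := Nat.lt_of_mul_lt_mul_left h4
      omega
    · rw [mem_Sset]; exact ⟨n, hu, d1, rfl⟩
    · rw [mem_Sset]; exact ⟨n', hv, d2, q.symm⟩

lemma Gk_adj_odd {k : ℕ} {u v : Fin (3 ^ k)} {q : ℕ} (hu : (u : ℕ) = 2 * q + 1) :
    (Gk k).Adj u v ↔ ((v : ℕ) = 2 * q ∨ (v : ℕ) = 2 * q + 2) := by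
  unfold Gk
  rw [SimpleGraph.fromRel_adj]
  constructor
  · rintro ⟨_, (h | ⟨i, hi, j, hj, h1, h2⟩) | (h | ⟨i, hi, j, hj, h1, h2⟩)⟩
    · omega
    · rw [mem_Sset] at h1
      obtain ⟨m, e1, _⟩ := h1
      omega
    · omega
    · rw [mem_Sset] at h2
      obtain ⟨m, e1, _⟩ := h2
      omega
  · intro h
    have hne : u ≠ v := by
      intro h'; rw [h'] at hu; omega
    refine ⟨hne, ?_⟩
    rcases h with h | h
    · right; left; omega
    · left; left; omega

open scoped Classical in
lemma card_le_colour {V : Type*} [Fintype V] (G : SimpleGraph V) (A B : Set V)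
    (hAB : ∀ v, v ∈ A ∨ v ∈ B) (a : Bool)
    (S : Finset ℕ) (x y : ℕ → V) (hx : ∀ i ∈ S, decide (x i ∈ B) = a)
    (hy : ∀ i ∈ S, decide (y i ∈ B) = !a)
    (hadj : ∀ i ∈ S, G.Adj (x i) (y i))
    (hn : (∀ i ∈ S, ∀ l ∈ S, i < l → ¬ G.Adj (x i) (y l)) ∨
      (∀ i ∈ S, ∀ l ∈ S, i < l → ¬ G.Adj (x l) (y i))) : S.card ≤ biadjRank G A B := by
  cases a with
  | true =>
    rw [biadjRank_comm]
    refine card_le_biadjRank' G B A S x y (fun i hi => by simpa using hx i hi)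
      (fun i hi => ?_) hadj hn
    have : y i ∉ B := by simpa using hy i hi
    exact (hAB _).resolve_right this
  | false =>
    refine card_le_biadjRank' G A B S x y (fun i hi => ?_)
      (fun i hi => by simpa using hy i hi) hadj hn
    have : x i ∉ B := by simpa using hx i hi
    exact (hAB _).resolve_right this

/-- The vertex with index `p` (for `p < 3 ^ k`). -/
def vx (k p : ℕ) : Fin (3 ^ k) := ⟨p % 3 ^ k, Nat.mod_lt _ (by positivity)⟩

lemma vx_val {k p : ℕ} (h : p < 3 ^ k) : (vx k p : ℕ) = p := Nat.mod_eq_of_lt h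

open scoped Classical in
lemma chg_bound {k r : ℕ} (A B : Set (Fin (3 ^ k))) (hAB : ∀ v, v ∈ A ∨ v ∈ B)
    (hr : biadjRank (Gk k) A B ≤ r) :
    (chg (fun p => decide (vx k p ∈ B)) 0 (3 ^ k - 1)).card ≤ 4 * r := by
  by_contra hbig
  push Not at hbig
  obtain ⟨⟨a, e⟩, _, hy⟩ := Finset.exists_lt_card_fiber_of_mul_lt_card_of_maps_to
    (s := chg (fun p => decide (vx k p ∈ B)) 0 (3 ^ k - 1)) (t := Finset.univ)
    (f := fun p => ((decide (vx k p ∈ B) : Bool), (decide (p % 2 = 0) : Bool))) (n := r)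
    (fun _ _ => Finset.mem_univ _) (by simpa using hbig)
  refine absurd hy (not_lt.mpr (le_trans ?_ hr))
  have hmem : ∀ p ∈ (chg (fun p => decide (vx k p ∈ B)) 0 (3 ^ k - 1)).filter
      (fun p => ((decide (vx k p ∈ B) : Bool), (decide (p % 2 = 0) : Bool)) = (a, e)),
      p + 1 < 3 ^ k ∧ decide (vx k p ∈ B) = a ∧ decide (vx k (p + 1) ∈ B) = !a ∧
        decide (p % 2 = 0) = e := by
    intro p hp
    simp only [chg, Finset.mem_filter, Finset.mem_Ico, Prod.mk.injEq] at hp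
    obtain ⟨⟨⟨_, h1⟩, h2⟩, h3, h4⟩ := hp
    refine ⟨by omega, h3, ?_, h4⟩
    rw [h3] at h2
    exact Bool.eq_not.mpr (Ne.symm h2)
  refine card_le_colour (Gk k) A B hAB a _ (fun p => vx k p) (fun p => vx k (p + 1))
    (fun p hp => (hmem p hp).2.1) (fun p hp => (hmem p hp).2.2.1) ?_ (Or.inl ?_)
  · intro p hp
    have h1 := (hmem p hp).1
    have e1 := vx_val (k := k) (p := p) (by omega)
    have e2 := vx_val h1
    rcases Nat.even_or_odd' p with ⟨q, hq | hq⟩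
    · rw [SimpleGraph.adj_comm, Gk_adj_odd (q := q) (by omega)]; omega
    · rw [Gk_adj_odd (q := q) (by omega)]; omega
  · intro p hp l hl hpl
    have h1 := (hmem p hp).1
    have h2 := (hmem l hl).1
    have h3 := (hmem p hp).2.2.2.trans (hmem l hl).2.2.2.symm
    have e1 := vx_val (k := k) (p := p) (by omega)
    have e2 := vx_val h2
    rw [decide_eq_decide] at h3
    rcases Nat.even_or_odd' p with ⟨q, hq | hq⟩
    · rw [SimpleGraph.adj_comm, Gk_adj_odd (q := l / 2) (by omega)]; omega
    · rw [Gk_adj_odd (q := q) (by omega)]; omega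

open scoped Classical in
lemma rank_of_concl {k M T : ℕ}
    (hM : ∀ X, M ≤ X → ∃ (S : Finset ℕ) (u v : ℕ → ℕ), T ≤ S.card ∧
    (∀ i ∈ S, X ≤ u i + M ∧ u i ≤ X ∧ X < v i ∧ v i ≤ X + M ∧ Nadj (u i) (v i)) ∧
    ((∀ i ∈ S, ∀ l ∈ S, i < l → ¬ Nadj (u i) (v l)) ∨
     (∀ i ∈ S, ∀ l ∈ S, i < l → ¬ Nadj (u l) (v i))))
    (A B : Set (Fin (3 ^ k))) (hAB : ∀ v, v ∈ A ∨ v ∈ B)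
    (hC : Concl M (fun p => decide (vx k p ∈ B)) (3 ^ k)) :
    T ≤ biadjRank (Gk k) A B := by
  obtain ⟨s, X, a, hMX, hlt, hl, hr⟩ := hC
  obtain ⟨S, u, v, hS, h1, h2⟩ := hM X hMX
  refine hS.trans ?_
  have hval : ∀ n, n ≤ X + M → (vx k (2 * 3 ^ s * n) : ℕ) = 2 * (3 ^ s * n) := by
    intro n hn
    rw [vx_val]
    · ring
    · exact lt_of_le_of_lt (Nat.mul_le_mul_left _ hn) hlt
  have hiff : ∀ i ∈ S, ∀ l ∈ S, ((Gk k).Adj (vx k (2 * 3 ^ s * u i)) (vx k (2 * 3 ^ s * v l)) ↔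
      Nadj (u i) (v l)) := by
    intro i hi l hl
    have hi' := h1 i hi
    have hl' := h1 l hl
    rw [Gk_adj_even (hval _ (by omega)) (hval _ (by omega)), Nadj_shift]
    exact Nat.mul_lt_mul_of_pos_left (by omega) (by positivity)
  refine card_le_colour (Gk k) A B hAB a S (fun i => vx k (2 * 3 ^ s * u i))
    (fun i => vx k (2 * 3 ^ s * v i)) ?_ ?_ ?_ ?_
  · intro i hi
    have hi' := h1 i hi
    exact hl (u i) (by omega) (by omega)
  · intro i hi
    have hi' := h1 i hi
    exact hr (v i) (by omega) (by omega)
  · intro i hi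
    exact (hiff i hi i hi).2 (h1 i hi).2.2.2.2
  · rcases h2 with h2 | h2
    · left
      intro i hi l hl hil
      rw [hiff i hi l hl]; exact h2 i hi l hl hil
    · right
      intro i hi l hl hil
      rw [hiff l hl i hi]; exact h2 i hi l hl hil

open scoped Classical in
lemma count_colour {k : ℕ} (B : Set (Fin (3 ^ k))) :
    ((Finset.Ico 0 (3 ^ k)).filter fun p => decide (vx k p ∈ B) = true).card = B.ncard := by
  rw [Set.ncard_eq_toFinset_card', ← Finset.card_map Fin.valEmbedding]
  congr 1
  ext p
  simp only [Finset.mem_filter, Finset.mem_Ico, Finset.mem_map, Set.mem_toFinset,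
    decide_eq_true_eq, Fin.valEmbedding_apply]
  constructor
  · rintro ⟨⟨_, h⟩, hB⟩
    exact ⟨_, hB, vx_val h⟩
  · rintro ⟨v, hv, rfl⟩
    refine ⟨⟨Nat.zero_le _, v.2⟩, ?_⟩
    have : vx k v = v := Fin.ext (vx_val v.2)
    rwa [this]

/-- The graphs `G_k` have unbounded rank-width: for every `r`
there exists `k ≥ 1` such that for every finite tree `T` in which every vertex has
degree 1 or 3 and whose leaves are in bijection with the vertex set of `G_k` (via
an injection `f` whose range is the set of leaves), some edge of `T` induces a
bipartition of the vertices of `G_k` whose biadjacency matrix over `ℤ/2` has rank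
strictly greater than `r`. -/
theorem stmt_10 (r : ℕ) :
    ∃ k : ℕ, 1 ≤ k ∧
      ∀ (W : Type) (T : SimpleGraph W), Finite W → T.IsTree →
        (∀ w : W, (T.neighborSet w).ncard = 1 ∨ (T.neighborSet w).ncard = 3) →
        ∀ f : Fin (3 ^ k) → W, Function.Injective f →
          (∀ w : W, (T.neighborSet w).ncard = 1 ↔ w ∈ Set.range f) →
          ∃ a b : W, T.Adj a b ∧
            r < biadjRank (Gk k)
              {v : Fin (3 ^ k) | (T.deleteEdges {s(a, b)}).Reachable (f v) a}
              {v : Fin (3 ^ k) | (T.deleteEdges {s(a, b)}).Reachable (f v) b} := by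
  classical
  obtain ⟨M, hM⟩ := core (r + 1)
  obtain ⟨N0, hN0⟩ := concl_of_balanced M (4 * r + 1)
  obtain ⟨k, hk⟩ : ∃ k, k = N0 + 2 := ⟨_, rfl⟩
  refine ⟨k, by omega, ?_⟩
  intro W T hW hT hdeg f hf hleaf
  have hkN : k < 3 ^ k := Nat.lt_pow_self (by norm_num)
  have h9 : 9 ≤ 3 ^ k := by
    calc 9 = 3 ^ 2 := by norm_num
      _ ≤ 3 ^ k := Nat.pow_le_pow_right (by norm_num) (by omega)
  obtain ⟨a, b, hab, hb1, hb2, hcov⟩ := tree_balanced hT hdeg f hf hleaf (by simp; omega)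
  refine ⟨a, b, hab, ?_⟩
  by_contra hle
  push Not at hle
  set A := {v : Fin (3 ^ k) | (T.deleteEdges {s(a, b)}).Reachable (f v) a}
  set B := {v : Fin (3 ^ k) | (T.deleteEdges {s(a, b)}).Reachable (f v) b}
  have hAB : ∀ v, v ∈ A ∨ v ∈ B := hcov
  have hch := chg_bound A B hAB hle
  rw [Fintype.card_fin] at hb1 hb2
  have hch2 : (chg (fun p => decide (vx k p ∈ B)) 0 (3 ^ k)).card ≤ 4 * r + 1 := by
    refine le_trans (Finset.card_le_card (t := insert (3 ^ k - 1)
      (chg (fun p => decide (vx k p ∈ B)) 0 (3 ^ k - 1))) ?_)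
      ((Finset.card_insert_le _ _).trans (by omega))
    intro p hp
    rw [Finset.mem_insert]
    simp only [chg, Finset.mem_filter, Finset.mem_Ico] at hp ⊢
    by_cases h : p = 3 ^ k - 1
    · left; exact h
    · right; exact ⟨⟨by omega, by omega⟩, hp.2⟩
  have hC := hN0 (3 ^ k) (by omega) _ hch2 (by
    have h1 := count_colour B
    have h2 := Finset.card_filter_add_card_filter_not (s := Finset.Ico 0 (3 ^ k))
        (fun p => decide (vx k p ∈ B) = true)
    simp only [Bool.not_eq_true, Nat.card_Ico] at h2
    rintro (_ | _)
    · omega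
    · omega)
  have := rank_of_concl hM A B hAB hC
  omega
end
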